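/- arXiv:2207.05694 — 3 statements merged into one kernel-verified Lean document; each statement's English description precedes it below -/
import Mathlib

section
/- Let p, q be probability vectors of dimension d with strictly positive entries whose nonincreasing rearrangements are not equal. Then the following are equivalent: (i) H(p) < H(q), where H(v) = −Σ_i v_i ln v_i is the Shannon entropy; (ii) there exist an integer N ≥ 1, probability vectors r_1,…,r_N of dimensions k_1,…,k_N, a probability vector t on the product index set {1..k_1}×…×{1..k_N} whose j-th marginal equals r_j for every j, and a doubly stochastic matrix B of size d·k_1⋯k_N such that B(p⊗r_1⊗…⊗r_N) = q⊗t. -/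
/-- The sum of the `k` largest entries of a vector (equivalently, for vectors with
nonnegative entries, the maximum of `∑ i ∈ s, x i` over subsets `s` of cardinality at
most `k`; this also accounts for padding with zeros). -/
noncomputable def topSum {ι : Type*} [Fintype ι] [DecidableEq ι] (x : ι → ℝ) (k : ℕ) : ℝ :=
  ((Finset.univ : Finset ι).powerset.filter (fun s => s.card ≤ k)).sup'
    ⟨∅, by simp⟩ (fun s => ∑ i ∈ s, x i)

/-- A probability vector: nonnegative entries summing to 1. -/
def IsProbVec {ι : Type*} [Fintype ι] (x : ι → ℝ) : Prop :=
  (∀ i, 0 ≤ x i) ∧ ∑ i, x i = 1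

/-- `x ≺ y` (majorization, after padding with zeros to a common dimension): every partial
sum of the `k` largest entries of `x` is at most that of `y`, with equal total sums. -/
def PMaj {ι κ : Type*} [Fintype ι] [DecidableEq ι] [Fintype κ] [DecidableEq κ]
    (x : ι → ℝ) (y : κ → ℝ) : Prop :=
  (∀ k : ℕ, topSum x k ≤ topSum y k) ∧ (∑ i, x i = ∑ j, y j)

/-- Tensor product of two vectors: `(x ⊗ y)_{(i,j)} = x_i y_j`. -/
def pvTensor {ι κ : Type*} (x : ι → ℝ) (y : κ → ℝ) : ι × κ → ℝ :=
  fun p => x p.1 * y p.2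

/-- The Shannon entropy `H(v) = -∑ i, v i * ln (v i)`. -/
noncomputable def shEnt {ι : Type*} [Fintype ι] (v : ι → ℝ) : ℝ :=
  - ∑ i, v i * Real.log (v i)


/-!
Suppose `H(p) < H(q)`. By typicality, for large `n` the product `p⊗ⁿ` is spread over far fewer
sequences than `q⊗ⁿ`, so a doubly stochastic matrix takes it close to `q⊗ⁿ`. Storing `n - 1` of the
copies together with a register in a catalyst, and shifting the register cyclically, turns this
conversion of many copies into a conversion of a single copy `p` whose catalyst ends up correlated
with the system. It reaches a distribution near any prescribed target; the error is removed by
aiming at a `q₀` with `H(p) < H(q₀)` of which `q` is a proper mixture with the uniform distribution.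
Finally, swapping the system with a fresh copy of `q` moves the correlations in between two
catalysts.

Conversely, entropy increases under doubly stochastic matrices and is subadditive, so a
transformation forces `H(p) ≤ H(q)`. Equality forces the catalysts to be independent and the matrix
to preserve the multiset of entries; comparing power sums, the catalysts cancel.
-/
open Filter Finset Matrix Topology

/-- The tensor product `⨂ j, r j` of a finite family of vectors. -/
def piTensor {ι : Type*} [Fintype ι] {α : ι → Type*} (r : (j : ι) → α j → ℝ)
    (f : (j : ι) → α j) : ℝ :=
  ∏ j, r j (f j)

/-- The `j`-th marginal of a vector on a product index set. -/
def marginal {ι : Type*} [Fintype ι] [DecidableEq ι] {α : ι → Type*} [∀ j, Fintype (α j)]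
    [∀ j, DecidableEq (α j)] (t : ((j : ι) → α j) → ℝ) (j : ι) (a : α j) : ℝ :=
  ∑ f with f j = a, t f

namespace IsProbVec

variable {ι κ : Type*} [Fintype ι] [Fintype κ] {x y : ι → ℝ}

theorem comp_equiv (hx : IsProbVec x) (e : κ ≃ ι) : IsProbVec (x ∘ e) :=
  ⟨fun k => hx.1 (e k), (e.sum_comp x).trans hx.2⟩

theorem pvTensor {z : κ → ℝ} (hx : IsProbVec x) (hz : IsProbVec z) :
    IsProbVec (pvTensor x z) :=
  ⟨fun v => mul_nonneg (hx.1 v.1) (hz.1 v.2), by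
    simp [_root_.pvTensor, Fintype.sum_prod_type, ← mul_sum, hx.2, hz.2]⟩

theorem snd_marginal {s : ι × κ → ℝ} (hs : IsProbVec s) : IsProbVec fun k => ∑ i, s (i, k) :=
  ⟨fun _ => sum_nonneg fun _ _ => hs.1 _, by rw [← Fintype.sum_prod_type_right, hs.2]⟩

theorem piTensor [DecidableEq ι] {α : ι → Type*} [∀ j, Fintype (α j)] {r : (j : ι) → α j → ℝ}
    (hr : ∀ j, IsProbVec (r j)) : IsProbVec (piTensor r) :=
  ⟨fun f => prod_nonneg fun j _ => (hr j).1 (f j), by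
    simp only [_root_.piTensor, ← Fintype.prod_sum, (hr _).2, prod_const_one]⟩

theorem exists_ne_zero (hx : IsProbVec x) : ∃ i, x i ≠ 0 := by
  by_contra! h
  simpa [h] using hx.2

theorem sum_compl [DecidableEq ι] (hx : IsProbVec x) (A : Finset ι) :
    ∑ i ∈ Aᶜ, x i = 1 - ∑ i ∈ A, x i := by
  rw [← hx.2, ← sum_add_sum_compl A x, add_sub_cancel_left]

theorem sum_le_one (hx : IsProbVec x) (A : Finset ι) : ∑ i ∈ A, x i ≤ 1 :=
  hx.2 ▸ sum_le_univ_sum_of_nonneg hx.1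

theorem sum_abs_sub_le_two (hx : IsProbVec x) (hy : IsProbVec y) : ∑ i, |x i - y i| ≤ 2 :=
  calc ∑ i, |x i - y i| ≤ ∑ i, (x i + y i) := sum_le_sum fun i _ =>
        abs_sub_le_iff.2 ⟨by linarith [hy.1 i], by linarith [hx.1 i]⟩
    _ = 2 := by rw [sum_add_distrib, hx.2, hy.2, one_add_one_eq_two]

end IsProbVec

section Marginal

variable {ι : Type*} [Fintype ι] [DecidableEq ι] {α : ι → Type*} [∀ j, Fintype (α j)]
  [∀ j, DecidableEq (α j)] {t : ((j : ι) → α j) → ℝ}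

theorem sum_marginal_mul (t : ((j : ι) → α j) → ℝ) (j : ι) (g : α j → ℝ) :
    ∑ a, marginal t j a * g a = ∑ f, t f * g (f j) := by
  rw [← sum_fiberwise univ fun f : (j : ι) → α j => f j]
  refine sum_congr rfl fun a _ => ?_
  rw [marginal, sum_mul]
  refine sum_congr rfl fun f hf => ?_
  rw [(mem_filter.1 hf).2]

theorem IsProbVec.marginal (ht : IsProbVec t) (j : ι) : IsProbVec (marginal t j) :=
  ⟨fun _ => sum_nonneg fun f _ => ht.1 f, by
    simpa [ht.2] using sum_marginal_mul t j fun _ => 1⟩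

theorem marginal_piTensor {r : (j : ι) → α j → ℝ} (hr : ∀ j, ∑ a, r j a = 1) :
    marginal (piTensor r) = r := by
  ext j a
  rw [marginal, ← Fintype.piFinset_univ,
    ← Fintype.piFinset_update_singleton_eq_filter_piFinset_eq _ j (mem_univ a)]
  simp only [piTensor]
  rw [← prod_univ_sum, Fintype.prod_eq_single j fun i hij => by simp [hij, hr i]]
  simp

theorem abs_marginal_sub_le (t t' : ((j : ι) → α j) → ℝ) (j : ι) (a : α j) :
    |marginal t j a - marginal t' j a| ≤ ∑ f, |t f - t' f| := by
  rw [marginal, marginal, ← sum_sub_distrib]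
  exact (abs_sum_le_sum_abs _ _).trans (sum_le_univ_sum_of_nonneg fun _ => abs_nonneg _)

theorem eq_zero_of_piTensor_marginal_eq_zero (ht : ∀ f, 0 ≤ t f) {f : (j : ι) → α j}
    (h : piTensor (marginal t) f = 0) : t f = 0 := by
  obtain ⟨j, -, hj⟩ := prod_eq_zero_iff.1 h
  exact (sum_eq_zero_iff_of_nonneg fun f _ => ht f).1 hj f (by simp)

end Marginal

section FinPi

variable {n : ℕ} {β : Fin 2 → Type*} [∀ j, Fintype (β j)] [∀ j, DecidableEq (β j)]

theorem marginal_fin_two_zero (T : β 0 × β 1 → ℝ) (a : β 0) :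
    marginal (fun f => T (f 0, f 1)) 0 a = ∑ b, T (a, b) := by
  rw [marginal, sum_filter, ← (piFinTwoEquiv β).symm.sum_comp, Fintype.sum_prod_type_right]
  simp [piFinTwoEquiv]

theorem marginal_fin_two_one (T : β 0 × β 1 → ℝ) (b : β 1) :
    marginal (fun f => T (f 0, f 1)) 1 b = ∑ a, T (a, b) := by
  rw [marginal, sum_filter, ← (piFinTwoEquiv β).symm.sum_comp, Fintype.sum_prod_type]
  simp [piFinTwoEquiv]

theorem piTensor_insertNth {α : Fin (n + 1) → Type*} (r : (i : Fin (n + 1)) → α i → ℝ)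
    (k : Fin (n + 1)) (a : α k) (z : (j : Fin n) → α (k.succAbove j)) :
    piTensor r (k.insertNth a z) = r k a * piTensor (fun j => r (k.succAbove j)) z := by
  simp [piTensor, Fin.prod_univ_succAbove _ k]

end FinPi

section Entropy

variable {ι κ : Type*} [Fintype ι] [Fintype κ]

theorem shEnt_eq_sum_negMulLog (x : ι → ℝ) : shEnt x = ∑ i, Real.negMulLog (x i) := by
  simp [shEnt, Real.negMulLog]

theorem continuous_shEnt : Continuous (shEnt : (ι → ℝ) → ℝ) := by
  simp only [funext shEnt_eq_sum_negMulLog]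
  fun_prop

theorem shEnt_comp_equiv (x : ι → ℝ) (e : κ ≃ ι) : shEnt (x ∘ e) = shEnt x :=
  congrArg Neg.neg (e.sum_comp fun i => x i * Real.log (x i))

theorem shEnt_sumElim_zero (x : ι → ℝ) : shEnt (Sum.elim x (0 : κ → ℝ)) = shEnt x := by
  simp [shEnt]

theorem shEnt_pvTensor {x : ι → ℝ} {y : κ → ℝ} (hx : ∑ i, x i = 1) (hy : ∑ j, y j = 1) :
    shEnt (pvTensor x y) = shEnt x + shEnt y := by
  simp only [shEnt_eq_sum_negMulLog, pvTensor, Fintype.sum_prod_type, Real.negMulLog_mul,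
    sum_add_distrib, ← sum_mul, ← mul_sum, hx, hy, one_mul]

/-- The correction `b - a` turns the summand `a * log (a / b)` of the relative entropy into a
nonnegative quantity. -/
theorem mul_klFun_div {a b : ℝ} (h : b = 0 → a = 0) :
    b * InformationTheory.klFun (a / b) = a * Real.log a - a * Real.log b + b - a := by
  rcases eq_or_ne b 0 with rfl | hb
  · simp [h rfl]
  rcases eq_or_ne a 0 with rfl | ha
  · simp [InformationTheory.klFun_zero]
  · rw [InformationTheory.klFun_apply, Real.log_div ha hb]
    field_simp

section Gibbs

variable {x y : ι → ℝ}

theorem sum_mul_klFun_div (hx : ∑ i, x i = 1) (hy : ∑ i, y i = 1) (h : ∀ i, y i = 0 → x i = 0) :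
    ∑ i, y i * InformationTheory.klFun (x i / y i) =
      -∑ i, x i * Real.log (y i) - shEnt x := by
  simp only [mul_klFun_div (h _), sum_add_distrib, sum_sub_distrib, hx, hy, shEnt]
  ring

theorem mul_klFun_div_nonneg (hx : IsProbVec x) (hy : IsProbVec y) (i : ι) :
    0 ≤ y i * InformationTheory.klFun (x i / y i) :=
  mul_nonneg (hy.1 i) (InformationTheory.klFun_nonneg (div_nonneg (hx.1 i) (hy.1 i)))

theorem shEnt_le_crossEntropy (hx : IsProbVec x) (hy : IsProbVec y)
    (h : ∀ i, y i = 0 → x i = 0) : shEnt x ≤ -∑ i, x i * Real.log (y i) := by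
  rw [← sub_nonneg, ← sum_mul_klFun_div hx.2 hy.2 h]
  exact sum_nonneg fun i _ => mul_klFun_div_nonneg hx hy i

theorem eq_of_crossEntropy_le_shEnt (hx : IsProbVec x) (hy : IsProbVec y)
    (h : ∀ i, y i = 0 → x i = 0) (hle : -∑ i, x i * Real.log (y i) ≤ shEnt x) : x = y := by
  have hsum : ∑ i, y i * InformationTheory.klFun (x i / y i) = 0 := by
    rw [sum_mul_klFun_div hx.2 hy.2 h]
    linarith [shEnt_le_crossEntropy hx hy h]
  ext i
  rcases eq_or_ne (y i) 0 with h0 | h0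
  · rw [h0, h i h0]
  have hi := (sum_eq_zero_iff_of_nonneg fun i _ => mul_klFun_div_nonneg hx hy i).1 hsum i
    (mem_univ i)
  exact (div_eq_one_iff_eq h0).1 ((InformationTheory.klFun_eq_zero_iff
    (div_nonneg (hx.1 i) (hy.1 i))).1 ((mul_eq_zero.1 hi).resolve_left h0))

end Gibbs

section Marginal

variable [DecidableEq ι] {α : ι → Type*} [∀ j, Fintype (α j)] [∀ j, DecidableEq (α j)]
  {t : ((j : ι) → α j) → ℝ}

theorem sum_mul_log_piTensor_marginal (ht : ∀ f, 0 ≤ t f) :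
    -∑ f, t f * Real.log (piTensor (marginal t) f) = ∑ j, shEnt (marginal t j) := by
  have hlog : ∀ f, t f * Real.log (piTensor (marginal t) f) =
      ∑ j, t f * Real.log (marginal t j (f j)) := by
    intro f
    rcases eq_or_ne (piTensor (marginal t) f) 0 with h | h
    · simp [eq_zero_of_piTensor_marginal_eq_zero ht h]
    · rw [piTensor, Real.log_prod fun j hj => prod_ne_zero_iff.1 h j hj, mul_sum]
  simp only [hlog, shEnt, sum_neg_distrib]
  rw [sum_comm]
  simp only [← sum_marginal_mul t _ fun a => Real.log (marginal t _ a)]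

theorem shEnt_piTensor {α : ι → Type*} [∀ j, Fintype (α j)] {r : (j : ι) → α j → ℝ}
    (hr : ∀ j, IsProbVec (r j)) : shEnt (piTensor r) = ∑ j, shEnt (r j) := by
  classical
  have hm := marginal_piTensor fun j => (hr j).2
  rw [← hm, ← sum_mul_log_piTensor_marginal (IsProbVec.piTensor hr).1, hm, shEnt]

theorem shEnt_le_shEnt_piTensor_marginal (ht : IsProbVec t) :
    shEnt t ≤ shEnt (piTensor (marginal t)) := by
  rw [shEnt_piTensor ht.marginal, ← sum_mul_log_piTensor_marginal ht.1]
  exact shEnt_le_crossEntropy ht (.piTensor ht.marginal) fun _ =>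
    eq_zero_of_piTensor_marginal_eq_zero ht.1

theorem eq_piTensor_marginal_of_shEnt_le (ht : IsProbVec t)
    (h : shEnt (piTensor (marginal t)) ≤ shEnt t) : t = piTensor (marginal t) := by
  rw [shEnt_piTensor ht.marginal, ← sum_mul_log_piTensor_marginal ht.1] at h
  exact eq_of_crossEntropy_le_shEnt ht (.piTensor ht.marginal)
    (fun _ => eq_zero_of_piTensor_marginal_eq_zero ht.1) h

end Marginal

end Entropy

/-- `y` is the image of `x` under some doubly stochastic matrix. -/
def BistochReach {ι : Type*} [Fintype ι] [DecidableEq ι] (x y : ι → ℝ) : Prop :=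
  ∃ B ∈ doublyStochastic ℝ ι, B *ᵥ x = y

theorem bistochReach_iff {ι : Type*} [Fintype ι] [DecidableEq ι] {x y : ι → ℝ} :
    BistochReach x y ↔ ∃ B : ι → ι → ℝ, (∀ u v, 0 ≤ B u v) ∧ (∀ u, ∑ v, B u v = 1) ∧
      (∀ v, ∑ u, B u v = 1) ∧ ∀ u, ∑ v, B u v * x v = y u := by
  simp only [BistochReach, mem_doublyStochastic_iff_sum, funext_iff, mulVec, dotProduct,
    and_assoc]
  rfl

theorem const_inv_card_mem_doublyStochastic {ι : Type*} [Fintype ι] [DecidableEq ι] :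
    (Matrix.of fun _ _ => (Fintype.card ι : ℝ)⁻¹) ∈ doublyStochastic ℝ ι := by
  refine mem_doublyStochastic_iff_sum.2 ⟨fun _ _ => by simp, fun i => ?_, fun i => ?_⟩ <;>
  · have : Nonempty ι := ⟨i⟩
    simp

namespace BistochReach

variable {ι κ : Type*} [Fintype ι] [DecidableEq ι] [Fintype κ] [DecidableEq κ] {x y z : ι → ℝ}

theorem refl (x : ι → ℝ) : BistochReach x x :=
  ⟨1, one_mem _, one_mulVec x⟩

theorem trans (hxy : BistochReach x y) (hyz : BistochReach y z) : BistochReach x z := by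
  obtain ⟨A, hA, rfl⟩ := hxy
  obtain ⟨B, hB, rfl⟩ := hyz
  exact ⟨B * A, mul_mem hB hA, (mulVec_mulVec _ _ _).symm⟩

theorem smul (h : BistochReach x y) (c : ℝ) : BistochReach (c • x) (c • y) := by
  obtain ⟨B, hB, rfl⟩ := h
  exact ⟨B, hB, mulVec_smul _ _ _⟩

theorem comp_equiv (h : BistochReach x y) (e₁ e₂ : κ ≃ ι) :
    BistochReach (x ∘ e₁) (y ∘ e₂) := by
  obtain ⟨B, hB, rfl⟩ := h
  refine ⟨B.reindex e₂.symm e₁.symm, reindex_mem_doublyStochastic hB, ?_⟩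
  ext i
  simp [mulVec, dotProduct, ← e₁.sum_comp]

theorem average (x : ι → ℝ) : BistochReach x fun _ => (Fintype.card ι : ℝ)⁻¹ * ∑ i, x i :=
  ⟨_, const_inv_card_mem_doublyStochastic, by ext; simp [mulVec, dotProduct, mul_sum]⟩

theorem sumElim {x' y' : κ → ℝ} (h : BistochReach x y) (h' : BistochReach x' y') :
    BistochReach (Sum.elim x x') (Sum.elim y y') := by
  obtain ⟨B, hB, rfl⟩ := h
  obtain ⟨B', hB', rfl⟩ := h'
  refine ⟨fromBlocks B 0 0 B', ?_, by simp [fromBlocks_mulVec]⟩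
  rw [mem_doublyStochastic_iff_sum] at hB hB' ⊢
  refine ⟨?_, ?_, ?_⟩
  · rintro (i | i) (j | j) <;> simp [hB.1, hB'.1]
  · rintro (i | i) <;> simp [hB.2.1, hB'.2.1]
  · rintro (i | i) <;> simp [hB.2.2, hB'.2.2]

theorem of_blocks {x y : ι × κ → ℝ}
    (h : ∀ k, BistochReach (fun i => x (i, k)) fun i => y (i, k)) : BistochReach x y := by
  choose B hB hxy using h
  simp only [mem_doublyStochastic_iff_sum] at hB
  refine ⟨blockDiagonal B, mem_doublyStochastic_iff_sum.2 ⟨?_, ?_, ?_⟩, ?_⟩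
  · rintro ⟨i, k⟩ ⟨j, l⟩
    rw [blockDiagonal_apply']
    split_ifs
    exacts [(hB k).1 i j, le_rfl]
  · rintro ⟨i, k⟩
    simp [Fintype.sum_prod_type, blockDiagonal_apply', (hB k).2.1]
  · rintro ⟨j, l⟩
    simp [Fintype.sum_prod_type, blockDiagonal_apply', (hB l).2.2]
  · ext ⟨i, k⟩
    rw [← congrFun (hxy k) i]
    simp [mulVec, dotProduct, Fintype.sum_prod_type, blockDiagonal_apply', ite_mul]

theorem pvTensor_right (h : BistochReach x y) (c : κ → ℝ) :
    BistochReach (pvTensor x c) (pvTensor y c) :=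
  of_blocks fun k => by
    simp only [pvTensor, mul_comm _ (c k)]
    exact h.smul (c k)

theorem sum_eq (h : BistochReach x y) : ∑ i, y i = ∑ i, x i := by
  obtain ⟨B, hB, rfl⟩ := h
  exact sum_mulVec_of_mem_doublyStochastic hB

theorem isProbVec (h : BistochReach x y) (hx : IsProbVec x) : IsProbVec y := by
  refine ⟨?_, h.sum_eq.trans hx.2⟩
  obtain ⟨B, hB, rfl⟩ := h
  exact fun i => sum_nonneg fun j _ => mul_nonneg (hB.1 i j) (hx.1 j)

end BistochReach

section EqualityCase

variable {ι : Type*} [Fintype ι] [DecidableEq ι] {x y : ι → ℝ} {B : Matrix ι ι ℝ}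

theorem sum_sum_mul_of_mem_doublyStochastic (hB : B ∈ doublyStochastic ℝ ι) (x : ι → ℝ) :
    ∑ i, ∑ j, B i j * x j = ∑ j, x j :=
  sum_mulVec_of_mem_doublyStochastic hB

theorem sum_mul_negMulLog_le (hB : B ∈ doublyStochastic ℝ ι) (hx : ∀ j, 0 ≤ x j) (i : ι) :
    ∑ j, B i j * Real.negMulLog (x j) ≤ Real.negMulLog ((B *ᵥ x) i) :=
  Real.concaveOn_negMulLog.le_map_sum (fun j _ => hB.1 i j)
    (sum_row_of_mem_doublyStochastic hB i) fun j _ => hx j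

theorem shEnt_le_shEnt_mulVec (hB : B ∈ doublyStochastic ℝ ι) (hx : ∀ j, 0 ≤ x j) :
    shEnt x ≤ shEnt (B *ᵥ x) := by
  rw [shEnt_eq_sum_negMulLog, shEnt_eq_sum_negMulLog, ← sum_sum_mul_of_mem_doublyStochastic hB]
  exact sum_le_sum fun i _ => sum_mul_negMulLog_le hB hx i

/-- The equality case of Jensen's inequality for the strictly concave function `negMulLog`. -/
theorem eq_mulVec_of_shEnt_mulVec_le (hB : B ∈ doublyStochastic ℝ ι) (hx : ∀ j, 0 ≤ x j)
    (h : shEnt (B *ᵥ x) ≤ shEnt x) {i j : ι} (hij : B i j ≠ 0) : x j = (B *ᵥ x) i := by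
  have hsum := (shEnt_le_shEnt_mulVec hB hx).antisymm h
  rw [shEnt_eq_sum_negMulLog, shEnt_eq_sum_negMulLog,
    ← sum_sum_mul_of_mem_doublyStochastic hB] at hsum
  have heq := (sum_eq_sum_iff_of_le fun i _ => sum_mul_negMulLog_le hB hx i).1 hsum i (mem_univ i)
  exact (Real.strictConcaveOn_negMulLog.map_sum_eq_iff' (fun j _ => hB.1 i j)
    (sum_row_of_mem_doublyStochastic hB i) fun j _ => hx j).1 heq.symm j (mem_univ j) hij

namespace BistochReach

theorem shEnt_le (h : BistochReach x y) (hx : ∀ j, 0 ≤ x j) : shEnt x ≤ shEnt y := by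
  obtain ⟨B, hB, rfl⟩ := h
  exact shEnt_le_shEnt_mulVec hB hx

theorem sum_comp_eq (h : BistochReach x y) (hx : ∀ j, 0 ≤ x j) (hle : shEnt y ≤ shEnt x)
    (g : ℝ → ℝ) : ∑ j, g (x j) = ∑ i, g (y i) := by
  obtain ⟨B, hB, rfl⟩ := h
  rw [← sum_sum_mul_of_mem_doublyStochastic hB]
  refine sum_congr rfl fun i _ => ?_
  have hmul : ∀ j, B i j * g (x j) = B i j * g ((B *ᵥ x) i) := fun j => by
    rcases eq_or_ne (B i j) 0 with h0 | h0
    · simp only [h0, zero_mul]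
    · rw [eq_mulVec_of_shEnt_mulVec_le hB hx hle h0]
  rw [sum_congr rfl fun j _ => hmul j, ← sum_mul, sum_row_of_mem_doublyStochastic hB, one_mul]

theorem card_support_le (h : BistochReach x y) (hx : ∀ j, 0 ≤ x j) :
    #{j | x j ≠ 0} ≤ #{i | y i ≠ 0} := by
  obtain ⟨B, hB, rfl⟩ := h
  have hzero : ∀ j ∈ ({j | x j ≠ 0} : Finset ι), ∀ i ∉ ({i | (B *ᵥ x) i ≠ 0} : Finset ι),
      B i j = 0 := by
    intro j hj i hi
    simp only [mem_filter_univ, not_not] at hj hi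
    exact (mul_eq_zero.1 ((sum_eq_zero_iff_of_nonneg fun j _ => mul_nonneg (hB.1 i j) (hx j)).1
      hi j (mem_univ j))).resolve_right hj
  have hle : (#{j | x j ≠ 0} : ℝ) ≤ #{i | (B *ᵥ x) i ≠ 0} := calc
    (#{j | x j ≠ 0} : ℝ) = ∑ j with x j ≠ 0, ∑ i, B i j := by
      simp only [sum_col_of_mem_doublyStochastic hB, sum_const, nsmul_one]
    _ = ∑ j with x j ≠ 0, ∑ i with (B *ᵥ x) i ≠ 0, B i j := sum_congr rfl fun j hj =>
      (sum_subset (subset_univ _) fun i _ hi => hzero j hj i hi).symm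
    _ ≤ ∑ i with (B *ᵥ x) i ≠ 0, ∑ j, B i j := by
      rw [sum_comm]
      exact sum_le_sum fun i _ => sum_le_univ_sum_of_nonneg fun j => hB.1 i j
    _ = #{i | (B *ᵥ x) i ≠ 0} := by
      simp only [sum_row_of_mem_doublyStochastic hB, sum_const, nsmul_one]
  exact_mod_cast hle

end BistochReach

end EqualityCase

/-- Lagrange interpolation writes the indicator of a value taken by `x` or `y` as a polynomial. -/
theorem exists_perm_of_sum_pow_eq {ι F : Type*} [Fintype ι] [Field F] [CharZero F] {x y : ι → F}
    (h : ∀ n : ℕ, ∑ i, x i ^ n = ∑ i, y i ^ n) : ∃ σ : Equiv.Perm ι, x = y ∘ σ := by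
  classical
  have hpoly : ∀ P : Polynomial F, ∑ i, P.eval (x i) = ∑ i, P.eval (y i) := by
    intro P
    simp only [Polynomial.eval_eq_sum_range]
    rw [sum_comm, sum_comm (s := univ)]
    simp only [← mul_sum, h]
  have hcard : ∀ a, Fintype.card {i // x i = a} = Fintype.card {i // y i = a} := by
    intro a
    let S : Finset F := insert a (univ.image x ∪ univ.image y)
    have heval : ∀ b ∈ S, (Lagrange.basis S id a).eval b = if b = a then 1 else 0 := by
      intro b hb
      split_ifs with hba
      · subst hba
        exact Lagrange.eval_basis_self (v := id) (Set.injOn_id _) hb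
      · exact Lagrange.eval_basis_of_ne (v := id) (Ne.symm hba) hb
    have hsum := hpoly (Lagrange.basis S id a)
    rw [sum_congr rfl fun i _ => heval (x i) (by simp [S]),
      sum_congr rfl fun i _ => heval (y i) (by simp [S]), sum_boole, sum_boole] at hsum
    rw [Fintype.card_subtype, Fintype.card_subtype]
    exact_mod_cast hsum
  refine ⟨Equiv.ofFiberEquiv fun a => Fintype.equivOfCardEq (hcard a), ?_⟩
  ext i
  exact (Equiv.ofFiberEquiv_map _ i).symm

section OneShot

variable {ι : Type*} [Fintype ι] [DecidableEq ι] {x w z : ι → ℝ} {A T : Finset ι}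

theorem IsProbVec.exists_complementary (hw : IsProbVec w) (hA : ∀ i, #A * w i ≤ 1) :
    ∃ c, IsProbVec c ∧ ∀ i, #A * w i + #Aᶜ * c i = 1 := by
  have hsum : ∑ i, (1 - #A * w i) = (#Aᶜ : ℝ) := by
    rw [sum_sub_distrib, ← mul_sum, hw.2, card_compl, Nat.cast_sub A.card_le_univ]
    simp
  rcases eq_or_ne (#Aᶜ : ℝ) 0 with h0 | h0
  · refine ⟨w, hw, fun i => ?_⟩
    have hi := (sum_eq_zero_iff_of_nonneg fun i _ => sub_nonneg.2 (hA i)).1 (hsum.trans h0) i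
      (mem_univ i)
    rw [h0]
    linarith
  · refine ⟨fun i => (1 - #A * w i) / #Aᶜ,
      ⟨fun i => div_nonneg (sub_nonneg.2 (hA i)) (Nat.cast_nonneg _), ?_⟩, fun i => ?_⟩
    · rw [← sum_div, hsum, div_self h0]
    · rw [mul_div_cancel₀ _ h0, add_sub_cancel]

theorem sum_ite_mem_eq_add_sum_compl (A : Finset ι) (f g : ι → ℝ) :
    ∑ i, (if i ∈ A then f i else g i) = ∑ i ∈ A, f i + ∑ i ∈ Aᶜ, g i := by
  simp [sum_ite, compl_eq_univ_sdiff, sdiff_eq_filter]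

/-- The matrix sends each basis vector in `A` to `w` and the others to the distribution `c` for
which the rows add up to one. -/
theorem exists_bistochReach_of_card_mul_le (hx : IsProbVec x) (hw : IsProbVec w)
    (hA : ∀ i, #A * w i ≤ 1) :
    ∃ y, BistochReach x y ∧ ∑ i, |y i - w i| ≤ 2 * ∑ i ∈ Aᶜ, x i := by
  obtain ⟨c, hc, hwc⟩ := hw.exists_complementary hA
  have hB : (Matrix.of fun i j => if j ∈ A then w i else c i) ∈ doublyStochastic ℝ ι := by
    refine mem_doublyStochastic_iff_sum.2 ⟨fun i j => ?_, fun i => ?_, fun j => ?_⟩ <;>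
      simp only [of_apply]
    · split_ifs
      exacts [hw.1 i, hc.1 i]
    · simp [sum_ite_mem_eq_add_sum_compl, hwc]
    · split_ifs
      exacts [hw.2, hc.2]
  refine ⟨_, ⟨_, hB, rfl⟩, ?_⟩
  have hxA : 0 ≤ ∑ i ∈ Aᶜ, x i := sum_nonneg fun i _ => hx.1 i
  have hdiff : ∀ i, ((Matrix.of fun i j => if j ∈ A then w i else c i) *ᵥ x) i - w i =
      (∑ i ∈ Aᶜ, x i) * (c i - w i) := by
    intro i
    simp only [mulVec, dotProduct, of_apply, ite_mul]
    rw [sum_ite_mem_eq_add_sum_compl, ← mul_sum, ← mul_sum, hx.sum_compl]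
    ring
  simp only [hdiff, abs_mul, abs_of_nonneg hxA, ← mul_sum]
  rw [mul_comm]
  exact mul_le_mul_of_nonneg_right (hc.sum_abs_sub_le_two hw) hxA

/-- The conditional distribution of `z` given the event `T`. It vanishes if `T` has weight zero. -/
noncomputable def condOn (z : ι → ℝ) (T : Finset ι) (i : ι) : ℝ :=
  if i ∈ T then z i / ∑ j ∈ T, z j else 0

theorem IsProbVec.condOn (hz : IsProbVec z) (hT : ∑ i ∈ T, z i ≠ 0) : IsProbVec (condOn z T) := by
  refine ⟨fun i => ?_, ?_⟩
  · rw [_root_.condOn]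
    split_ifs
    exacts [div_nonneg (hz.1 i) (sum_nonneg fun j _ => hz.1 j), le_rfl]
  · simp only [_root_.condOn, sum_ite_mem, univ_inter]
    rw [← sum_div, div_self hT]

theorem sum_abs_condOn_sub (hz : IsProbVec z) (hT : ∑ i ∈ T, z i ≠ 0) :
    ∑ i, |condOn z T i - z i| = 2 * ∑ i ∈ Tᶜ, z i := by
  have hpos : 0 < ∑ i ∈ T, z i := (sum_nonneg fun j _ => hz.1 j).lt_of_ne' hT
  have hin : ∀ i ∈ T, |condOn z T i - z i| = z i / ∑ j ∈ T, z j - z i := fun i hi => by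
    rw [condOn, if_pos hi, abs_of_nonneg]
    exact sub_nonneg.2 (le_div_self (hz.1 i) hpos (hz.sum_le_one T))
  have hout : ∀ i ∈ Tᶜ, |condOn z T i - z i| = z i := fun i hi => by
    rw [condOn, if_neg (mem_compl.1 hi), zero_sub, abs_neg, abs_of_nonneg (hz.1 i)]
  rw [← sum_add_sum_compl T, sum_congr rfl hin, sum_congr rfl hout, sum_sub_distrib, ← sum_div,
    div_self hT, ← hz.sum_compl, two_mul]

theorem exists_bistochReach_sum_abs_sub_le (hx : IsProbVec x) (hz : IsProbVec z)
    (hT : ∑ i ∈ T, z i ≠ 0) (h : ∀ i ∈ T, #A * z i ≤ ∑ j ∈ T, z j) :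
    ∃ y, BistochReach x y ∧ ∑ i, |y i - z i| ≤ 2 * ∑ i ∈ Aᶜ, x i + 2 * ∑ i ∈ Tᶜ, z i := by
  have hpos : 0 < ∑ i ∈ T, z i := (sum_nonneg fun j _ => hz.1 j).lt_of_ne' hT
  have hA : ∀ i, #A * condOn z T i ≤ 1 := by
    intro i
    rw [condOn]
    split_ifs with hi
    · rw [← mul_div_assoc, div_le_one hpos]
      exact h i hi
    · simp
  obtain ⟨y, hy, hyz⟩ := exists_bistochReach_of_card_mul_le hx (hz.condOn hT) hA
  refine ⟨y, hy, ?_⟩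
  calc ∑ i, |y i - z i| ≤ ∑ i, (|y i - condOn z T i| + |condOn z T i - z i|) :=
        sum_le_sum fun i _ => abs_sub_le _ _ _
    _ ≤ _ := by
        rw [sum_add_distrib, sum_abs_condOn_sub hz hT]
        gcongr

end OneShot

section Typicality

variable {α : Type*} [Fintype α] {p q : α → ℝ} {δ : ℝ} {n : ℕ}

theorem sum_piTensor_cons (p : α → ℝ) (F : (Fin (n + 1) → α) → ℝ) :
    ∑ x, piTensor (fun _ => p) x * F x =
      ∑ a, p a * ∑ x, piTensor (fun _ => p) x * F (Fin.cons a x) := by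
  rw [← (Fin.consEquiv fun _ => α).sum_comp, Fintype.sum_prod_type]
  simp only [piTensor, Fin.prod_univ_succ, mul_sum, mul_assoc]
  rfl

theorem sum_piTensor_mul_sum_sq (hp : IsProbVec p) {g : α → ℝ} (hg : ∑ a, p a * g a = 0) (n : ℕ) :
    ∑ x : Fin n → α, piTensor (fun _ => p) x * (∑ i, g (x i)) ^ 2 = n * ∑ a, p a * g a ^ 2 := by
  classical
  induction n with
  | zero => simp [piTensor]
  | succ n ih =>
    have hone := (IsProbVec.piTensor fun _ : Fin n => hp).2
    have hstep : ∀ a, ∑ x : Fin n → α, piTensor (fun _ => p) x * (g a + ∑ i, g (x i)) ^ 2 =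
        g a ^ 2 + 2 * g a * (∑ x : Fin n → α, piTensor (fun _ => p) x * ∑ i, g (x i)) +
          n * ∑ b, p b * g b ^ 2 := by
      intro a
      rw [← ih, ← mul_one (g a ^ 2), ← hone, mul_sum, mul_sum, ← sum_add_distrib,
        ← sum_add_distrib]
      exact sum_congr rfl fun x _ => by ring
    rw [sum_piTensor_cons]
    simp only [Fin.sum_univ_succ, Fin.cons_zero, Fin.cons_succ, hstep]
    calc _ = ∑ a, p a * g a ^ 2 + (∑ a, p a * g a) *
          (2 * ∑ x : Fin n → α, piTensor (fun _ => p) x * ∑ i, g (x i)) +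
          (∑ a, p a) * (n * ∑ b, p b * g b ^ 2) := by
          rw [sum_mul, sum_mul, ← sum_add_distrib, ← sum_add_distrib]
          exact sum_congr rfl fun a _ => by ring
      _ = _ := by
          rw [hg, hp.2]
          push_cast
          ring

/-- The sequences of length `n` whose probability under the `n`-fold tensor power of `p` is
`exp (-n H(p))` up to a factor `exp (±nδ)`. -/
noncomputable def typicalSet (p : α → ℝ) (δ : ℝ) (n : ℕ) : Finset (Fin n → α) :=
  {x | Real.exp (-(n * (shEnt p + δ))) ≤ piTensor (fun _ => p) x ∧
    piTensor (fun _ => p) x ≤ Real.exp (-(n * (shEnt p - δ)))}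

theorem card_typicalSet_le (hp : IsProbVec p) (δ : ℝ) (n : ℕ) :
    #(typicalSet p δ n) ≤ Real.exp (n * (shEnt p + δ)) := by
  have h : #(typicalSet p δ n) * Real.exp (-(n * (shEnt p + δ))) ≤ 1 :=
    calc _ ≤ ∑ x ∈ typicalSet p δ n, piTensor (fun _ => p) x := by
          rw [← nsmul_eq_mul]
          exact card_nsmul_le_sum _ _ _ fun x hx => (mem_filter.1 hx).2.1
      _ ≤ 1 := (IsProbVec.piTensor fun _ => hp).sum_le_one _
  rwa [Real.exp_neg, ← div_eq_mul_inv, div_le_one (Real.exp_pos _)] at h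

theorem card_typicalSet_mul_piTensor_le (hp : IsProbVec p) {x : Fin n → α}
    (hx : x ∈ typicalSet q δ n) :
    #(typicalSet p δ n) * piTensor (fun _ => q) x ≤
      Real.exp (-(n * (shEnt q - shEnt p - 2 * δ))) := by
  obtain ⟨hlower, hupper⟩ := (mem_filter.1 hx).2
  calc _ ≤ Real.exp (n * (shEnt p + δ)) * Real.exp (-(n * (shEnt q - δ))) :=
        mul_le_mul (card_typicalSet_le hp δ n) hupper ((Real.exp_pos _).le.trans hlower)
          (Real.exp_pos _).le
    _ = _ := by
        rw [← Real.exp_add]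
        ring_nf

theorem mem_typicalSet_of_abs_le {x : Fin n → α} (hx : 0 < piTensor (fun _ => p) x)
    (h : |∑ i, (-Real.log (p (x i)) - shEnt p)| ≤ n * δ) : x ∈ typicalSet p δ n := by
  have hlog : Real.log (piTensor (fun _ => p) x) = ∑ i, Real.log (p (x i)) :=
    Real.log_prod fun i hi => prod_ne_zero_iff.1 hx.ne' i hi
  simp only [sum_sub_distrib, sum_neg_distrib, ← hlog, sum_const, card_univ, Fintype.card_fin,
    nsmul_eq_mul, abs_le] at h
  rw [typicalSet, mem_filter_univ, ← Real.le_log_iff_exp_le hx, ← Real.log_le_iff_le_exp hx]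
  constructor <;> linarith

variable [DecidableEq α]

/-- Chebyshev's inequality for the surprisal `-log p`, whose expectation is the entropy. -/
theorem sum_compl_typicalSet_mul_le (hp : IsProbVec p) (hδ : 0 ≤ δ) (n : ℕ) :
    (∑ x ∈ (typicalSet p δ n)ᶜ, piTensor (fun _ => p) x) * (n * δ) ^ 2 ≤
      n * ∑ a, p a * (-Real.log (p a) - shEnt p) ^ 2 := by
  have hmean : ∑ a, p a * (-Real.log (p a) - shEnt p) = 0 := by
    simp only [mul_sub, mul_neg, sum_sub_distrib, sum_neg_distrib, ← sum_mul, hp.2, shEnt]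
    ring
  have hnonneg := (IsProbVec.piTensor fun _ : Fin n => hp).1
  rw [← sum_piTensor_mul_sum_sq hp hmean, sum_mul]
  refine (sum_le_sum fun x hx => ?_).trans
    (sum_le_univ_sum_of_nonneg fun x => mul_nonneg (hnonneg x) (sq_nonneg _))
  rcases (hnonneg x).eq_or_lt with h0 | h0
  · simp only [← h0, zero_mul, le_refl]
  · have hdev := mt (mem_typicalSet_of_abs_le h0) (mem_compl.1 hx)
    exact mul_le_mul_of_nonneg_left
      (sq_le_sq.2 ((abs_of_nonneg (by positivity)).trans_le (not_le.1 hdev).le)) h0.le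

theorem tendsto_sum_compl_typicalSet (hp : IsProbVec p) (hδ : 0 < δ) :
    Tendsto (fun n => ∑ x ∈ (typicalSet p δ n)ᶜ, piTensor (fun _ => p) x) atTop (𝓝 0) := by
  refine squeeze_zero' (Eventually.of_forall fun n => sum_nonneg fun x _ =>
    (IsProbVec.piTensor fun _ => hp).1 x) ?_ (tendsto_const_div_atTop_nhds_zero_nat
      ((∑ a, p a * (-Real.log (p a) - shEnt p) ^ 2) / δ ^ 2))
  filter_upwards [eventually_gt_atTop 0] with n hn
  have hn' : (0 : ℝ) < n := Nat.cast_pos.2 hn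
  rw [div_div, le_div_iff₀ (by positivity)]
  refine le_of_mul_le_mul_left ?_ hn'
  linarith [sum_compl_typicalSet_mul_le hp hδ.le n]

theorem eventually_exists_bistochReach_piTensor (hp : IsProbVec p) (hq : IsProbVec q)
    (h : shEnt p < shEnt q) {ε : ℝ} (hε : 0 < ε) :
    ∀ᶠ n : ℕ in atTop, ∃ y : (Fin n → α) → ℝ, BistochReach (piTensor fun _ => p) y ∧
      ∑ x, |y x - piTensor (fun _ => q) x| ≤ ε := by
  obtain ⟨δ, hδ, hδH⟩ : ∃ δ, 0 < δ ∧ shEnt q - shEnt p - 2 * δ = δ :=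
    ⟨(shEnt q - shEnt p) / 3, by linarith, by ring⟩
  have hexp : Tendsto (fun n : ℕ => Real.exp (-(n * δ))) atTop (𝓝 0) :=
    Real.tendsto_exp_neg_atTop_nhds_zero.comp (tendsto_natCast_atTop_atTop.atTop_mul_const hδ)
  have hε4 : 0 < ε / 4 := by positivity
  filter_upwards [(tendsto_sum_compl_typicalSet hp hδ).eventually_lt_const hε4,
    (tendsto_sum_compl_typicalSet hq hδ).eventually_lt_const hε4,
    (tendsto_sum_compl_typicalSet hq hδ).eventually_lt_const one_half_pos,
    hexp.eventually_lt_const one_half_pos] with n hpn hqn hqn' hen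
  have hqT := (IsProbVec.piTensor fun _ : Fin n => hq).sum_compl (typicalSet q δ n)
  obtain ⟨y, hy, hyq⟩ := exists_bistochReach_sum_abs_sub_le (A := typicalSet p δ n)
    (IsProbVec.piTensor fun _ => hp) (IsProbVec.piTensor fun _ => hq)
    (T := typicalSet q δ n) (by linarith) fun x hx => by
      have := card_typicalSet_mul_piTensor_le hp hx
      rw [hδH] at this
      linarith
  exact ⟨y, hy, by linarith⟩

end Typicality

section Hybrid

variable {α : Type*} [Fintype α] [DecidableEq α] {p : α → ℝ}

theorem isProbVec_single (a : α) : IsProbVec (Pi.single a 1 : α → ℝ) :=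
  ⟨(Pi.single_nonneg (α := fun _ => ℝ)).2 zero_le_one, by simp⟩

theorem isProbVec_ite_single (hp : IsProbVec p) (c : Prop) [Decidable c] (a : α) :
    IsProbVec (if c then p else Pi.single a 1) := by
  split_ifs
  exacts [hp, isProbVec_single a]

/-- The hybrid distribution of a random sequence whose first `k` coordinates are independent with
distribution `p` and whose remaining coordinates are those of a sequence drawn from `y`. -/
def hybrid {n : ℕ} (p : α → ℝ) (y : (Fin n → α) → ℝ) (k : ℕ) (x : Fin n → α) : ℝ :=
  ∑ u, y u * piTensor (fun i : Fin n => if (i : ℕ) < k then p else Pi.single (u i) 1) x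

theorem IsProbVec.hybrid {n : ℕ} {y : (Fin n → α) → ℝ} (hp : IsProbVec p) (hy : IsProbVec y)
    (k : ℕ) : IsProbVec (hybrid p y k) := by
  have hu (u : Fin n → α) := IsProbVec.piTensor fun i : Fin n =>
    isProbVec_ite_single hp ((i : ℕ) < k) (u i)
  refine ⟨fun x => sum_nonneg fun u _ => mul_nonneg (hy.1 u) ((hu u).1 x), ?_⟩
  simp only [_root_.hybrid]
  rw [sum_comm]
  simp only [← mul_sum, (hu _).2, mul_one, hy.2]

theorem hybrid_zero {n : ℕ} (p : α → ℝ) (y : (Fin n → α) → ℝ) : hybrid p y 0 = y := by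
  ext x
  simp [hybrid, piTensor, Pi.single_apply, prod_ite_zero, ← funext_iff]

theorem hybrid_self {n : ℕ} {y : (Fin n → α) → ℝ} (hy : ∑ u, y u = 1) :
    hybrid p y n = piTensor fun _ => p := by
  ext x
  simp [hybrid, ← sum_mul, hy]

variable {m : ℕ} (y : (Fin (m + 1) → α) → ℝ) (k : Fin (m + 1)) (a : α) (z : Fin m → α)

theorem hybrid_insertNth (l : ℕ) : hybrid p y l (k.insertNth a z) =
    ∑ u, y u * ((if (k : ℕ) < l then p else Pi.single (u k) 1 : α → ℝ) a *
      piTensor (fun j => if (k.succAbove j : ℕ) < l then p else Pi.single (u (k.succAbove j)) 1)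
        z) := by
  simp only [hybrid, piTensor_insertNth]

/-- Passing from one hybrid to the next resamples the coordinate `k` from `p`, independently. -/
theorem hybrid_succ_insertNth : hybrid p y (k + 1) (k.insertNth a z) =
    p a * ∑ b, hybrid p y k (k.insertNth b z) := by
  have hlt : ∀ j, ((k.succAbove j : ℕ) < k + 1 ↔ (k.succAbove j : ℕ) < k) := fun j =>
    Order.lt_succ_iff.trans
      ⟨fun h => lt_of_le_of_ne h (Fin.val_ne_of_ne (k.succAbove_ne j)), le_of_lt⟩
  simp only [hybrid_insertNth, hlt, lt_irrefl, Nat.lt_succ_self, if_true, if_false]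
  rw [sum_comm, mul_sum]
  refine sum_congr rfl fun u _ => ?_
  rw [← mul_sum, ← sum_mul, (isProbVec_single (u k)).2]
  ring

theorem sum_hybrid_insertNth (hp : IsProbVec p) :
    ∑ z, hybrid p y k (k.insertNth a z) = marginal y k a := by
  simp only [hybrid_insertNth, lt_irrefl, if_false, marginal, sum_filter]
  rw [sum_comm]
  refine sum_congr rfl fun u _ => ?_
  rw [← mul_sum, ← mul_sum, (IsProbVec.piTensor fun j => isProbVec_ite_single hp _ _).2]
  simp [Pi.single_apply, eq_comm]

/-- A cyclic shift of the register `k` identifies all the hybrids on the left with hybrids on the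
right, except for the last one, which `h` converts into the first one. -/
theorem bistochReach_hybrid_succ {y : (Fin (m + 1) → α) → ℝ} (hy : ∑ u, y u = 1)
    (h : BistochReach (piTensor fun _ => p) y) :
    BistochReach (fun v : (Fin (m + 1) → α) × Fin (m + 1) => hybrid p y (v.2 + 1) v.1)
      fun v => hybrid p y v.2 v.1 := by
  let shift := Equiv.prodCongr (Equiv.refl (Fin (m + 1) → α)) (finRotate (m + 1))
  have hshift : BistochReach (fun v : (Fin (m + 1) → α) × Fin (m + 1) => hybrid p y (v.2 + 1) v.1)
      ((fun v => hybrid p y v.2 v.1) ∘ shift) := by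
    refine BistochReach.of_blocks fun k => ?_
    rcases Fin.eq_castSucc_or_eq_last k with ⟨j, rfl⟩ | rfl
    · simpa [shift] using BistochReach.refl _
    · simpa [shift, hybrid_zero, hybrid_self hy] using h
  simpa [Function.comp_assoc] using hshift.comp_equiv (Equiv.refl _) shift.symm

end Hybrid

/-- `p` can be transformed into `q` by a doubly stochastic matrix acting jointly on the system and
a catalyst `c`, whose distribution is returned unchanged but possibly correlated with the system:
`s` is the joint final distribution. Catalysts are indexed by `Fin n` to avoid quantifying over
types, see `CorrelatedCatalysis.of_fintype`. -/
def CorrelatedCatalysis {α : Type*} [Fintype α] [DecidableEq α] (p q : α → ℝ) : Prop :=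
  ∃ (n : ℕ) (c : Fin n → ℝ) (s : α × Fin n → ℝ), IsProbVec c ∧ BistochReach (pvTensor p c) s ∧
    (∀ k, ∑ a, s (a, k) = c k) ∧ ∀ a, ∑ k, s (a, k) = q a

namespace CorrelatedCatalysis

variable {α β κ : Type*} [Fintype α] [DecidableEq α] [Fintype β] [DecidableEq β] [Fintype κ]
  [DecidableEq κ] {p q q' : α → ℝ}

theorem of_fintype {c : κ → ℝ} {s : α × κ → ℝ} (hc : IsProbVec c)
    (hs : BistochReach (pvTensor p c) s) (hsc : ∀ k, ∑ a, s (a, k) = c k)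
    (hsq : ∀ a, ∑ k, s (a, k) = q a) : CorrelatedCatalysis p q := by
  let e := (Fintype.equivFin κ).symm
  let e' := Equiv.prodCongr (Equiv.refl α) e
  exact ⟨_, c ∘ e, s ∘ e', hc.comp_equiv e, hs.comp_equiv e' e', fun k => hsc (e k), fun a =>
    (e.sum_comp fun k => s (a, k)).trans (hsq a)⟩

/-- A conversion of `m + 1` copies gives a conversion of one copy whose catalyst holds `m` copies
and a register `k`: the last coordinate produced is the `k`-th one for a uniformly random `k`. -/
theorem of_bistochReach_piTensor (hp : IsProbVec p) {m : ℕ} {y : (Fin (m + 1) → α) → ℝ}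
    (h : BistochReach (piTensor fun _ => p) y) :
    CorrelatedCatalysis p fun a => (m + 1 : ℝ)⁻¹ * ∑ k, marginal y k a := by
  have hy := h.isProbVec (.piTensor fun _ => hp)
  let φ : α × (Fin m → α) × Fin (m + 1) ≃ (Fin (m + 1) → α) × Fin (m + 1) :=
    (Equiv.prodAssoc _ _ _).symm.trans
      (Equiv.prodCongrLeft fun k => Fin.insertNthEquiv (fun _ => α) k)
  have hφ : ∀ a z k, φ (a, z, k) = (k.insertNth a z, k) := fun _ _ _ => rfl
  let S (v : (Fin (m + 1) → α) × Fin (m + 1)) : ℝ := (m + 1 : ℝ)⁻¹ * hybrid p y v.2 v.1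
  have hS : IsProbVec S := by
    refine ⟨fun v => mul_nonneg (by positivity) ((hp.hybrid hy _).1 _), ?_⟩
    simp only [S, ← mul_sum, Fintype.sum_prod_type_right, (hp.hybrid hy _).2]
    simp [field]
  refine of_fintype (hS.comp_equiv φ).snd_marginal (s := S ∘ φ) ?_ (fun _ => rfl) fun a => ?_
  · convert ((bistochReach_hybrid_succ hy.2 h).smul (m + 1 : ℝ)⁻¹).comp_equiv φ φ using 1
    swap
    · rfl
    ext ⟨a, z, k⟩
    simp only [pvTensor, Function.comp_apply, hφ, S, ← mul_sum, Pi.smul_apply, smul_eq_mul,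
      hybrid_succ_insertNth]
    ring
  · simp only [Function.comp_apply, Fintype.sum_prod_type_right, hφ, S, ← mul_sum,
      sum_hybrid_insertNth y _ a hp]

theorem trans_bistochReach (h : CorrelatedCatalysis p q) (hq : BistochReach q q') :
    CorrelatedCatalysis p q' := by
  obtain ⟨n, c, s, hc, hs, hsc, hsq⟩ := h
  obtain ⟨D, hD, rfl⟩ := hq
  refine ⟨n, c, fun v => (D *ᵥ fun a => s (a, v.2)) v.1, hc,
    hs.trans (.of_blocks fun k => ⟨D, hD, rfl⟩), fun k => ?_, fun a => ?_⟩
  · exact (sum_mulVec_of_mem_doublyStochastic hD).trans (hsc k)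
  · simp only [mulVec, dotProduct, ← hsq, mul_sum]
    rw [sum_comm]

theorem comp_equiv (h : CorrelatedCatalysis p q) (e₁ e₂ : β ≃ α) :
    CorrelatedCatalysis (p ∘ e₁) (q ∘ e₂) := by
  obtain ⟨n, c, s, hc, hs, hsc, hsq⟩ := h
  exact ⟨n, c, s ∘ Equiv.prodCongr e₂ (Equiv.refl _), hc,
    hs.comp_equiv (e₁.prodCongr (Equiv.refl _)) (e₂.prodCongr (Equiv.refl _)),
    fun k => (e₂.sum_comp fun a => s (a, k)).trans (hsc k), fun a => hsq (e₂ a)⟩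

theorem sumElim_zero (h : CorrelatedCatalysis p q) :
    CorrelatedCatalysis (Sum.elim p (0 : β → ℝ)) (Sum.elim q 0) := by
  obtain ⟨n, c, s, hc, hs, hsc, hsq⟩ := h
  let e := Equiv.sumProdDistrib α β (Fin n)
  refine ⟨n, c, Sum.elim s 0 ∘ e, hc, ?_, fun k => ?_, ?_⟩
  · convert (hs.sumElim (.refl (0 : β × Fin n → ℝ))).comp_equiv e e using 1
    ext ⟨a | b, k⟩ <;> simp [e, pvTensor]
  · simp [e, hsc]
  · rintro (a | b) <;> simp [e, hsq]

end CorrelatedCatalysis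

section Exactness

variable {α : Type*} [Fintype α] {x y q : α → ℝ} {s : ℝ}

/-- The mixture of `x` with the uniform distribution, the latter having weight `s`. -/
noncomputable def depolarize (s : ℝ) (x : α → ℝ) (a : α) : ℝ :=
  (1 - s) * x a + s / Fintype.card α

theorem depolarize_of_forall_eq (hq : ∑ a, q a = 1) (hconst : ∀ a b, q a = q b) (s : ℝ) (a : α) :
    depolarize s q a = (Fintype.card α : ℝ)⁻¹ := by
  have hqa : q a = (Fintype.card α : ℝ)⁻¹ := by
    refine eq_inv_of_mul_eq_one_right ?_
    simpa [← hconst a] using hq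
  rw [depolarize, hqa]
  ring

theorem sum_depolarize (hx : IsProbVec x) (s : ℝ) : ∑ a, depolarize s x a = 1 := by
  obtain ⟨a, -⟩ := hx.exists_ne_zero
  have : Nonempty α := ⟨a⟩
  simp [depolarize, sum_add_distrib, ← mul_sum, hx.2, mul_div_cancel₀]

theorem exists_depolarize_eq (hq : IsProbVec q) (hpos : ∀ a, 0 < q a) {H : ℝ}
    (hH : H < shEnt q) :
    ∃ s q₀, 0 < s ∧ s ≤ 1 ∧ IsProbVec q₀ ∧ H < shEnt q₀ ∧ depolarize s q₀ = q := by
  obtain ⟨b, -⟩ := hq.exists_ne_zero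
  have : Nonempty α := ⟨b⟩
  let q₀ (s : ℝ) (a : α) : ℝ := (q a - s / Fintype.card α) / (1 - s)
  have hcont : ContinuousAt q₀ 0 :=
    continuousAt_pi.2 fun a => ContinuousAt.div (by fun_prop) (by fun_prop) (by simp)
  have hzero : q₀ 0 = q := by
    ext a
    simp [q₀]
  have hH' : ∀ᶠ s in 𝓝 0, H < shEnt (q₀ s) :=
    (continuous_shEnt.continuousAt.comp hcont).eventually_const_lt (by simpa [hzero] using hH)
  have hpos' : ∀ᶠ s in 𝓝 0, ∀ a, 0 < q₀ s a := eventually_all.2 fun a =>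
    (continuousAt_pi.1 hcont a).eventually_const_lt (by simpa [hzero] using hpos a)
  obtain ⟨s, hs0, hs1, hsH, hsq⟩ := ((eventually_mem_nhdsWithin (s := Set.Ioi 0)).and
    (((gt_mem_nhds one_pos).and (hH'.and hpos')).filter_mono nhdsWithin_le_nhds)).exists
  have hs : 1 - s ≠ 0 := (sub_pos.2 hs1).ne'
  refine ⟨s, q₀ s, hs0, hs1.le, ⟨fun a => (hsq a).le, ?_⟩, hsH, ?_⟩
  · simp [q₀, ← sum_div, sum_sub_distrib, hq.2, mul_div_cancel₀, hs]
  · ext a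
    simp only [depolarize, q₀]
    rw [mul_div_cancel₀ _ hs, sub_add_cancel]

variable [DecidableEq α]

/-- Entries bounded below leave room to correct the output of `B` by a rank-one perturbation that
reads off the difference `x i - x j`. -/
theorem BistochReach.of_abs_sub_mulVec_le {B : Matrix α α ℝ} (hB : B ∈ doublyStochastic ℝ α)
    {η : ℝ} (hη : ∀ a b, η ≤ B a b) {i j : α} (hij : x j < x i) (hsum : ∑ a, y a = ∑ a, x a)
    (h : ∀ a, |y a - (B *ᵥ x) a| ≤ η * (x i - x j)) : BistochReach x y := by
  have hpos : 0 < x i - x j := sub_pos.2 hij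
  let e (a : α) : ℝ := (y a - (B *ᵥ x) a) / (x i - x j)
  let f : α → ℝ := Pi.single i 1 - Pi.single j 1
  have hef : ∀ a b, |e a * f b| ≤ η := by
    intro a b
    have he : |e a| ≤ η := by
      rw [abs_div, abs_of_pos hpos, div_le_iff₀ hpos]
      exact h a
    have hf : |f b| ≤ 1 := by
      have : i ≠ j := fun hij' => hij.ne (congrArg x hij'.symm)
      simp only [f, Pi.sub_apply, Pi.single_apply]
      split_ifs <;> simp_all
    rw [abs_mul, ← mul_one η]
    exact mul_le_mul he hf (abs_nonneg _) ((abs_nonneg _).trans he)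
  have he_sum : ∑ a, e a = 0 := by
    simp only [e, ← sum_div, sum_sub_distrib, sum_mulVec_of_mem_doublyStochastic hB, hsum,
      sub_self, zero_div]
  have hf_sum : ∑ a, f a = 0 := by simp [f]
  refine ⟨B + vecMulVec e f, mem_doublyStochastic_iff_sum.2 ⟨fun a b => ?_, fun a => ?_,
    fun b => ?_⟩, ?_⟩
  · rw [Matrix.add_apply, vecMulVec_apply]
    linarith [hη a b, neg_le_of_abs_le (hef a b)]
  · simp only [Matrix.add_apply, vecMulVec_apply, sum_add_distrib, ← mul_sum, hf_sum, mul_zero,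
      add_zero, sum_row_of_mem_doublyStochastic hB]
  · simp only [Matrix.add_apply, vecMulVec_apply, sum_add_distrib, ← sum_mul, he_sum, zero_mul,
      add_zero, sum_col_of_mem_doublyStochastic hB]
  · ext a
    have hfx : f ⬝ᵥ x = x i - x j := by simp [f, sub_dotProduct]
    rw [add_mulVec, vecMulVec_mulVec, hfx]
    simp [e, div_mul_cancel₀ _ hpos.ne']

theorem exists_mulVec_eq_depolarize (hs0 : 0 ≤ s) (hs1 : s ≤ 1) :
    ∃ B ∈ doublyStochastic ℝ α, (∀ a b, s / Fintype.card α ≤ B a b) ∧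
      ∀ x : α → ℝ, ∑ a, x a = 1 → B *ᵥ x = depolarize s x := by
  refine ⟨(1 - s) • 1 + s • Matrix.of fun _ _ => (Fintype.card α : ℝ)⁻¹,
    convex_doublyStochastic (one_mem _) const_inv_card_mem_doublyStochastic (sub_nonneg.2 hs1) hs0
      (sub_add_cancel 1 s), fun a b => ?_, fun x hx => ?_⟩
  · have h1 : 0 ≤ (1 - s) * (1 : Matrix α α ℝ) a b :=
      mul_nonneg (sub_nonneg.2 hs1) (by rw [one_apply]; split_ifs <;> simp)
    simpa [div_eq_mul_inv] using h1
  · ext a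
    rw [add_mulVec, smul_mulVec, smul_mulVec, one_mulVec]
    simp [depolarize, mulVec, dotProduct, ← mul_sum, hx, div_eq_mul_inv]

theorem eventually_bistochReach_depolarize (hq : IsProbVec q) (hs0 : 0 < s) (hs1 : s ≤ 1) :
    ∀ᶠ x in 𝓝 q, ∑ a, x a = 1 → BistochReach x (depolarize s q) := by
  obtain ⟨b, -⟩ := hq.exists_ne_zero
  have : Nonempty α := ⟨b⟩
  by_cases hconst : ∀ a b, q a = q b
  · refine .of_forall fun x hx => ?_
    rw [funext (depolarize_of_forall_eq hq.2 hconst s)]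
    simpa [hx] using BistochReach.average x
  obtain ⟨i, j, hij⟩ : ∃ i j, q j < q i := by
    contrapose! hconst
    exact fun a b => (hconst a b).antisymm (hconst b a)
  obtain ⟨B, hB, hBs, hBx⟩ := exists_mulVec_eq_depolarize (α := α) hs0.le hs1
  have hd : 0 < s / Fintype.card α := by positivity
  have hgap : ∀ᶠ x in 𝓝 q, x j < x i :=
    (continuousAt_apply j q).eventually_lt (continuousAt_apply i q) hij
  have hnear : ∀ᶠ x in 𝓝 q, ∀ a,
      |depolarize s q a - depolarize s x a| < s / Fintype.card α * (x i - x j) := by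
    refine eventually_all.2 fun a => ContinuousAt.eventually_lt ?_ ?_ ?_
    · unfold depolarize
      exact (Continuous.abs (by fun_prop)).continuousAt
    · fun_prop
    · simpa using mul_pos hd (sub_pos.2 hij)
  filter_upwards [hgap, hnear] with x hx hxq hx1
  refine .of_abs_sub_mulVec_le hB hBs hx ((sum_depolarize hq s).trans hx1.symm) fun a => ?_
  rw [hBx x hx1]
  exact (hxq a).le

theorem exists_eventually_bistochReach (hq : IsProbVec q) (hpos : ∀ a, 0 < q a) {H : ℝ}
    (hH : H < shEnt q) :
    ∃ q₀, IsProbVec q₀ ∧ H < shEnt q₀ ∧ ∀ᶠ x in 𝓝 q₀, ∑ a, x a = 1 → BistochReach x q := by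
  obtain ⟨s, q₀, hs0, hs1, hq₀, hq₀H, rfl⟩ := exists_depolarize_eq hq hpos hH
  exact ⟨q₀, hq₀, hq₀H, eventually_bistochReach_depolarize hq₀ hs0 hs1⟩

end Exactness

theorem isProbVec_sumElim_zero {α β : Type*} [Fintype α] [Fintype β] {x : α → ℝ} :
    IsProbVec (Sum.elim x (0 : β → ℝ)) ↔ IsProbVec x := by
  simp [IsProbVec]

theorem exists_perm_mem_of_card_le {α : Type*} [Finite α] {s t : Finset α} (h : #s ≤ #t) :
    ∃ σ : Equiv.Perm α, ∀ a, σ a ∈ s → a ∈ t := by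
  classical
  obtain ⟨u, hut, hu⟩ := exists_subset_card_eq h
  let e : {a // a ∈ s} ≃ {a // a ∈ u} := Finset.equivOfCardEq hu.symm
  exact ⟨e.extendSubtype.symm, fun a ha => hut (by simpa using e.extendSubtype_mem _ ha)⟩

namespace CorrelatedCatalysis

variable {α : Type*} [Fintype α] [DecidableEq α] {p q : α → ℝ}

theorem of_shEnt_lt (hp : IsProbVec p) (hq : IsProbVec q) (hpos : ∀ a, 0 < q a)
    (h : shEnt p < shEnt q) : CorrelatedCatalysis p q := by
  obtain ⟨q₀, hq₀, hpq₀, hnear⟩ := exists_eventually_bistochReach hq hpos h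
  obtain ⟨ε, hε, hball⟩ := Metric.eventually_nhds_iff.1 hnear
  obtain ⟨n, ⟨y, hy, hyq⟩, hn⟩ := ((eventually_exists_bistochReach_piTensor hp hq₀ hpq₀
    (half_pos hε)).and (eventually_gt_atTop 0)).exists
  obtain ⟨m, rfl⟩ := Nat.exists_eq_succ_of_ne_zero hn.ne'
  have hyprob := hy.isProbVec (.piTensor fun _ => hp)
  refine (of_bistochReach_piTensor hp hy).trans_bistochReach (hball ?_ ?_)
  · refine ((dist_pi_le_iff (half_pos hε).le).2 fun a => ?_).trans_lt (half_lt_self hε)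
    have hmarg : ∀ k, |marginal y k a - q₀ a| ≤ ε / 2 := fun k => by
      simpa [marginal_piTensor fun _ => hq₀.2] using (abs_marginal_sub_le y _ k a).trans hyq
    have havg : (m + 1 : ℝ)⁻¹ * ∑ k, marginal y k a - q₀ a =
        (m + 1 : ℝ)⁻¹ * ∑ k, (marginal y k a - q₀ a) := by
      simp [field]
    rw [Real.dist_eq, havg, abs_mul, abs_of_pos (by positivity), inv_mul_le_iff₀ (by positivity)]
    calc |∑ k, (marginal y k a - q₀ a)| ≤ ∑ k, |marginal y k a - q₀ a| := abs_sum_le_sum_abs _ _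
      _ ≤ ∑ _k : Fin (m + 1), ε / 2 := sum_le_sum fun k _ => hmarg k
      _ = (m + 1) * (ε / 2) := by simp
  · rw [← mul_sum, sum_comm]
    simp [(hyprob.marginal _).2, field]

/-- Reduces to a target of full support by permuting the support of `p` into that of `q`. -/
theorem of_shEnt_lt_of_card_support_le (hp : IsProbVec p) (hq : IsProbVec q)
    (h : shEnt p < shEnt q) (hcard : #{a | p a ≠ 0} ≤ #{a | q a ≠ 0}) :
    CorrelatedCatalysis p q := by
  obtain ⟨σ, hσ⟩ := exists_perm_mem_of_card_le hcard
  let e := Equiv.sumCompl fun a => q a ≠ 0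
  have hrestrict : ∀ x : α → ℝ, (∀ a, x a ≠ 0 → q a ≠ 0) →
      x ∘ e = Sum.elim (fun a : {a // q a ≠ 0} => x a) 0 := by
    intro x hx
    ext (a | a)
    · rfl
    · exact not_not.1 (mt (hx a) a.2)
  have hpe : p ∘ e.trans σ = _ := hrestrict (p ∘ σ) fun a ha => by simpa using hσ a (by simpa)
  have hqe := hrestrict q fun _ => id
  have hp' := isProbVec_sumElim_zero.1 (hpe ▸ hp.comp_equiv (e.trans σ))
  have hq' := isProbVec_sumElim_zero.1 (hqe ▸ hq.comp_equiv e)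
  rw [← shEnt_comp_equiv p (e.trans σ), ← shEnt_comp_equiv q e, hpe, hqe, shEnt_sumElim_zero,
    shEnt_sumElim_zero] at h
  have key := (of_shEnt_lt hp' hq' (fun a => (hq.1 a).lt_of_ne' a.2) h).sumElim_zero
    (β := {a // ¬ q a ≠ 0})
  rw [← hpe, ← hqe] at key
  simpa only [Function.comp_assoc, Equiv.self_comp_symm, Function.comp_id] using
    key.comp_equiv (e.trans σ).symm e.symm

end CorrelatedCatalysis

/-- `p` can be transformed into `q`, uncorrelated with the final state `t` of finitely many
catalysts, by a doubly stochastic matrix acting jointly on the system and on catalysts that start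
out independent. Requiring that every catalyst be returned with its initial distribution says that
the initial distributions are the marginals of `t`. Catalysts are indexed by `Fin (k j)` to avoid
quantifying over types. -/
def MarginalCatalysis {α : Type*} [Fintype α] [DecidableEq α] (p q : α → ℝ) : Prop :=
  ∃ N, 1 ≤ N ∧ ∃ (k : Fin N → ℕ) (t : ((j : Fin N) → Fin (k j)) → ℝ), IsProbVec t ∧
    BistochReach (pvTensor p (piTensor (marginal t))) (pvTensor q t)

section MarginalCatalysis

variable {α : Type*} [Fintype α] [DecidableEq α] {p q : α → ℝ}

/-- The correlation is moved away from the system by swapping it with a fresh copy of `q`, which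
serves as a second catalyst. -/
theorem CorrelatedCatalysis.marginalCatalysis (h : CorrelatedCatalysis p q) (hp : IsProbVec p) :
    MarginalCatalysis p q := by
  obtain ⟨n, c, s, hc, hs, hsc, hsq⟩ := h
  let e := Fintype.equivFin α
  let k : Fin 2 → ℕ := ![n, Fintype.card α]
  let T (v : Fin n × Fin (Fintype.card α)) : ℝ := s (e.symm v.2, v.1)
  let t (f : (j : Fin 2) → Fin (k j)) : ℝ := T (f 0, f 1)
  let g : ((j : Fin 2) → Fin (k j)) ≃ Fin n × α :=
    (piFinTwoEquiv fun j => Fin (k j)).trans ((Equiv.refl _).prodCongr e.symm)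
  have hzero : ∀ i, marginal t 0 i = c i := fun i =>
    (marginal_fin_two_zero (β := fun j => Fin (k j)) T i).trans
      ((e.symm.sum_comp fun a => s (a, i)).trans (hsc i))
  have hone : ∀ i, marginal t 1 i = q (e.symm i) := fun i =>
    (marginal_fin_two_one (β := fun j => Fin (k j)) T i).trans (hsq (e.symm i))
  have ht : IsProbVec t :=
    (hs.isProbVec (hp.pvTensor hc)).comp_equiv (g.trans (Equiv.prodComm _ _))
  refine ⟨2, one_le_two, k, t, ht, ?_⟩
  convert (hs.pvTensor_right q).comp_equiv
    (((Equiv.refl _).prodCongr g).trans (Equiv.prodAssoc _ _ _).symm)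
    (((Equiv.refl _).prodCongr (g.trans (Equiv.prodComm _ _))).trans (Equiv.prodComm _ _)) using 1
  · ext ⟨a, f⟩
    have hw : piTensor (marginal t) f = c (f 0) * q (e.symm (f 1)) := by
      rw [piTensor, Fin.prod_univ_two, hzero, hone]
    exact (congrArg (p a * ·) hw).trans (mul_assoc _ _ _).symm
  · ext ⟨a, f⟩
    exact mul_comm _ _

theorem MarginalCatalysis.card_support_le (h : MarginalCatalysis p q) (hp : IsProbVec p) :
    #{a | p a ≠ 0} ≤ #{a | q a ≠ 0} := by
  obtain ⟨N, -, k, t, ht, hreach⟩ := h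
  have hw : IsProbVec (piTensor (marginal t)) := .piTensor ht.marginal
  obtain ⟨f, hf⟩ := ht.exists_ne_zero
  have hprod : ∀ (x : α → ℝ) (y : ((j : Fin N) → Fin (k j)) → ℝ),
      #{v | pvTensor x y v ≠ 0} = #{a | x a ≠ 0} * #{f | y f ≠ 0} := by
    intro x y
    rw [← card_product]
    congr 1
    ext
    simp [pvTensor]
  have hle := hreach.card_support_le (hp.pvTensor hw).1
  rw [hprod, hprod] at hle
  have hsub : #{f | t f ≠ 0} ≤ #{f | piTensor (marginal t) f ≠ 0} :=
    card_le_card <| monotone_filter_right _ fun f _ =>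
      mt (eq_zero_of_piTensor_marginal_eq_zero ht.1)
  have hpos : 0 < #{f | t f ≠ 0} := card_pos.2 ⟨f, by simpa using hf⟩
  exact Nat.le_of_mul_le_mul_right ((Nat.mul_le_mul_left _ hsub).trans hle) hpos

theorem MarginalCatalysis.exists_perm_of_shEnt_le (h : MarginalCatalysis p q) (hp : IsProbVec p)
    (hq : IsProbVec q) (hle : shEnt q ≤ shEnt p) : ∃ σ : Equiv.Perm α, p = q ∘ σ := by
  obtain ⟨N, -, k, t, ht, hreach⟩ := h
  have hw : IsProbVec (piTensor (marginal t)) := .piTensor ht.marginal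
  have hsub := shEnt_le_shEnt_piTensor_marginal ht
  have hmono := hreach.shEnt_le (hp.pvTensor hw).1
  rw [shEnt_pvTensor hp.2 hw.2, shEnt_pvTensor hq.2 ht.2] at hmono
  have hindep : t = piTensor (marginal t) := eq_piTensor_marginal_of_shEnt_le ht (by linarith)
  have hent : shEnt (pvTensor q t) ≤ shEnt (pvTensor p t) := by
    rw [shEnt_pvTensor hp.2 ht.2, shEnt_pvTensor hq.2 ht.2]
    linarith
  rw [← hindep] at hreach
  obtain ⟨f, hf⟩ := ht.exists_ne_zero
  refine exists_perm_of_sum_pow_eq fun n => ?_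
  have hpow := hreach.sum_comp_eq (hp.pvTensor ht).1 hent (· ^ n)
  simp only [pvTensor, Fintype.sum_prod_type, mul_pow, ← sum_mul_sum] at hpow
  have htn : 0 < ∑ f, t f ^ n := sum_pos' (fun f _ => pow_nonneg (ht.1 f) n)
    ⟨f, mem_univ f, pow_pos ((ht.1 f).lt_of_ne' hf) n⟩
  exact mul_right_cancel₀ htn.ne' hpow

end MarginalCatalysis

theorem mueller_pastena_general {α : Type*} [Fintype α] [DecidableEq α] {p q : α → ℝ}
    (hp : IsProbVec p) (hq : IsProbVec q) (hne : ¬ ∃ σ : Equiv.Perm α, p = q ∘ σ) :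
    shEnt p < shEnt q ∧ #{a | p a ≠ 0} ≤ #{a | q a ≠ 0} ↔ MarginalCatalysis p q := by
  constructor
  · rintro ⟨hlt, hcard⟩
    exact (CorrelatedCatalysis.of_shEnt_lt_of_card_support_le hp hq hlt hcard).marginalCatalysis
      hp
  · intro h
    exact ⟨lt_of_not_ge fun hle => hne (h.exists_perm_of_shEnt_le hp hq hle), h.card_support_le hp⟩

/-- Müller–Pastena: single-shot characterization of transformations with marginal
(correlated) catalysts under bistochastic maps by strict increase of Shannon entropy. -/
theorem mueller_pastena {d : ℕ} (p q : Fin d → ℝ)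
    (hp : IsProbVec p) (hq : IsProbVec q)
    (hpp : ∀ i, 0 < p i) (hqp : ∀ i, 0 < q i)
    (hne : ¬ ∃ σ : Equiv.Perm (Fin d), p = q ∘ σ) :
    shEnt p < shEnt q ↔
      ∃ N : ℕ, 1 ≤ N ∧ ∃ (k : Fin N → ℕ) (r : (j : Fin N) → Fin (k j) → ℝ)
        (t : ((j : Fin N) → Fin (k j)) → ℝ)
        (B : Fin d × ((j : Fin N) → Fin (k j)) → Fin d × ((j : Fin N) → Fin (k j)) → ℝ),
        (∀ j, IsProbVec (r j)) ∧ IsProbVec t ∧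
        (∀ (j : Fin N) (a : Fin (k j)),
          ∑ f ∈ Finset.univ.filter (fun f : (j' : Fin N) → Fin (k j') => f j = a), t f
            = r j a) ∧
        (∀ u v, 0 ≤ B u v) ∧ (∀ u, ∑ v, B u v = 1) ∧ (∀ v, ∑ u, B u v = 1) ∧
        (∀ u, ∑ v, B u v * pvTensor p (fun f => ∏ j, r j (f j)) v = pvTensor q t u) := by
  have hcard : #{i | p i ≠ 0} ≤ #{i | q i ≠ 0} :=
    card_le_card fun i _ => by simp [(hqp i).ne']
  rw [← and_iff_left (a := shEnt p < shEnt q) hcard, mueller_pastena_general hp hq hne]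
  refine exists_congr fun N => and_congr_right fun _ => exists_congr fun k => ⟨?_, ?_⟩
  · rintro ⟨t, ht, h⟩
    obtain ⟨B, hB⟩ := bistochReach_iff.1 h
    exact ⟨marginal t, t, B, ht.marginal, ht, fun _ _ => rfl, hB⟩
  · rintro ⟨r, t, B, -, ht, hm, hB⟩
    obtain rfl : r = marginal t := by
      ext j a
      exact (hm j a).symm
    exact ⟨t, ht, bistochReach_iff.2 ⟨B, hB⟩⟩
end

section
/- Let d_S ≥ 2 and d_C ≥ 2 be integers, and let ω, ω′ be probability vectors of dimension d_C such that for every pair of probability vectors p, q of dimension d_S one has q⊗ω′ ≺ p⊗ω (i.e., the catalyst pair (ω, ω′) enables every state transformation of a d_S-dimensional system via unital operations). Then (1/2)‖ω − ω′‖₁ ≥ (d_S − 1)/(1 + (d_S − 1)·log₂d_C/log₂d_S). -/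
/-!
Majorization compares the hockey-stick functions `excess x t = ∑ i, (x i - t)₊`. Taking the
maximally mixed state of dimension `d` to a pure one forces `excess ω' t ≤ excess ω (d * t)`, while
`ω` and `ω'` at trace distance `δ` have hockey-stick functions that differ by at most `δ`. So
dividing the threshold by `d` raises `excess ω` by at most `δ`. Start from the largest entry `M` of
`ω`, where the excess vanishes: one division gives `M - M / d ≤ δ`, and after `r` of them
`1 - n * M / d ^ (r + 1) ≤ excess ω' (M / d ^ (r + 1)) ≤ r * δ`, with `n` the dimension of the
catalyst. Choosing `r = ⌊log_d n⌋` and interpolating `n / d ^ r` between `1` and `d` by Bernoulli's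
inequality gives the bound.
-/

section Excess

variable {ι κ : Type*} [Fintype ι] [Fintype κ]

/-- The hockey-stick function `t ↦ ∑ i, (x i - t)₊` of a vector, through which majorization is
tested one threshold at a time. -/
noncomputable def excess (x : ι → ℝ) (t : ℝ) : ℝ :=
  ∑ i, (x i - t)⁺

theorem sum_sub_card_mul_le_excess (x : ι → ℝ) (t : ℝ) (s : Finset ι) :
    ∑ i ∈ s, x i - s.card * t ≤ excess x t :=
  calc ∑ i ∈ s, x i - s.card * t = ∑ i ∈ s, (x i - t) := by
        rw [Finset.sum_sub_distrib, Finset.sum_const, nsmul_eq_mul]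
    _ ≤ ∑ i ∈ s, (x i - t)⁺ := Finset.sum_le_sum fun _ _ => le_posPart _
    _ ≤ excess x t :=
        Finset.sum_le_sum_of_subset_of_nonneg s.subset_univ fun _ _ _ => posPart_nonneg _

theorem sub_le_excess (x : ι → ℝ) (t : ℝ) (i : ι) : x i - t ≤ excess x t := by
  simpa using sum_sub_card_mul_le_excess x t {i}

theorem IsProbVec.one_sub_card_mul_le_excess {x : ι → ℝ} (hx : IsProbVec x) (t : ℝ) :
    1 - Fintype.card ι * t ≤ excess x t := by
  simpa [hx.2] using sum_sub_card_mul_le_excess x t Finset.univ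

theorem exists_excess_eq_sum_sub_card_mul (x : ι → ℝ) (t : ℝ) :
    ∃ s : Finset ι, excess x t = ∑ i ∈ s, x i - s.card * t := by
  refine ⟨Finset.univ.filter fun i => 0 ≤ x i - t, ?_⟩
  rw [← nsmul_eq_mul, ← Finset.sum_const, ← Finset.sum_sub_distrib, Finset.sum_filter]
  exact Finset.sum_congr rfl fun _ _ => posPart_eq_ite

theorem excess_eq_zero {x : ι → ℝ} {t : ℝ} (hx : ∀ i, x i ≤ t) : excess x t = 0 :=
  Finset.sum_eq_zero fun i _ => posPart_eq_zero.2 (sub_nonpos.2 (hx i))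

theorem excess_le_excess_add_half_sum_abs_sub {x y : ι → ℝ} (hxy : ∑ i, x i = ∑ i, y i) (t : ℝ) :
    excess x t ≤ excess y t + 1 / 2 * ∑ i, |x i - y i| := by
  have half_sum_abs_eq : 1 / 2 * ∑ i, |x i - y i| = ∑ i, (|x i - y i| + (x i - y i)) / 2 := by
    rw [← Finset.sum_div, Finset.sum_add_distrib, Finset.sum_sub_distrib, hxy]
    ring
  rw [half_sum_abs_eq, excess, excess, ← Finset.sum_add_distrib]
  refine Finset.sum_le_sum fun i _ => sup_le ?_ ?_
  · linarith [le_posPart (y i - t), le_abs_self (x i - y i)]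
  · linarith [posPart_nonneg (y i - t), neg_abs_le (x i - y i)]

section Majorization

variable [DecidableEq ι] [DecidableEq κ]

theorem sum_le_topSum (x : ι → ℝ) (s : Finset ι) : ∑ i ∈ s, x i ≤ topSum x s.card :=
  Finset.le_sup' (fun s => ∑ i ∈ s, x i) (by simp)

theorem topSum_le_excess_add (x : ι → ℝ) {t : ℝ} (ht : 0 ≤ t) (k : ℕ) :
    topSum x k ≤ excess x t + k * t := by
  refine Finset.sup'_le _ _ fun s hs => ?_
  have card_mul_le : s.card * t ≤ k * t := by
    gcongr
    exact (Finset.mem_filter.1 hs).2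
  linarith [sum_sub_card_mul_le_excess x t s]

theorem PMaj.excess_le {x : ι → ℝ} {y : κ → ℝ} (h : PMaj x y) {t : ℝ} (ht : 0 ≤ t) :
    excess x t ≤ excess y t := by
  obtain ⟨s, hs⟩ := exists_excess_eq_sum_sub_card_mul x t
  linarith [sum_le_topSum x s, h.1 s.card, topSum_le_excess_add y ht s.card]

end Majorization

theorem excess_pvTensor_single [DecidableEq ι] (i : ι) (y : κ → ℝ) {t : ℝ} (ht : 0 ≤ t) :
    excess (pvTensor (Pi.single i 1) y) t = excess y t := by
  simp only [excess, pvTensor, Fintype.sum_prod_type]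
  rw [Fintype.sum_eq_single i fun j hj => ?_]
  · simp only [Pi.single_eq_same, one_mul]
  · simp [Pi.single_eq_of_ne hj, ht]

theorem excess_pvTensor_uniform [Nonempty ι] (y : κ → ℝ) (t : ℝ) :
    excess (pvTensor (fun _ : ι => (Fintype.card ι : ℝ)⁻¹) y) t =
      excess y (Fintype.card ι * t) := by
  have card_pos : (0 : ℝ) < Fintype.card ι := by exact_mod_cast Fintype.card_pos
  simp only [excess, pvTensor, Fintype.sum_prod_type, Finset.sum_const, Finset.card_univ,
    nsmul_eq_mul, Finset.mul_sum, posPart_def]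
  refine Finset.sum_congr rfl fun j _ => ?_
  rw [mul_max_of_nonneg _ _ card_pos.le, mul_zero, mul_sub, mul_inv_cancel_left₀ card_pos.ne']

theorem isProbVec_uniform [Nonempty ι] : IsProbVec fun _ : ι => (Fintype.card ι : ℝ)⁻¹ :=
  ⟨fun _ => by positivity, by simp⟩

theorem excess_div_pow_le {x : ι → ℝ} {M d δ : ℝ} (hM : 0 ≤ M) (hd : 0 ≤ d)
    (hx : ∀ i, x i ≤ M) (hstep : ∀ t, 0 ≤ t → excess x (t / d) ≤ excess x t + δ) (r : ℕ) :
    excess x (M / d ^ r) ≤ r * δ := by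
  induction r with
  | zero => simp [excess_eq_zero hx]
  | succ r ih =>
    calc excess x (M / d ^ (r + 1)) = excess x (M / d ^ r / d) := by rw [pow_succ, div_div]
      _ ≤ excess x (M / d ^ r) + δ := hstep _ (by positivity)
      _ ≤ r * δ + δ := by gcongr
      _ = (r + 1 : ℕ) * δ := by push_cast; ring

end Excess

theorem div_pow_floor_logb_le {d x : ℝ} (hd : 1 < d) (hx : 1 ≤ x) :
    x / d ^ ⌊Real.logb d x⌋₊ ≤ 1 + (d - 1) * (Real.logb d x - ⌊Real.logb d x⌋₊) := by
  have hd_pos : 0 < d := by linarith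
  have floor_le := Nat.floor_le (Real.logb_nonneg hd hx)
  have lt_floor_add_one := Nat.lt_floor_add_one (Real.logb d x)
  have bernoulli := rpow_one_add_le_one_add_mul_self (s := d - 1) (by linarith)
    (sub_nonneg.2 floor_le) (by linarith)
  rwa [add_sub_cancel, Real.rpow_sub hd_pos, Real.rpow_logb hd_pos hd.ne' (by linarith),
    Real.rpow_natCast, mul_comm (_ - _)] at bernoulli

theorem sub_one_le_mul_of_excess_le {κ : Type*} [Fintype κ] {ω ω' : κ → ℝ} {d δ : ℝ}
    (hω : IsProbVec ω) (hω' : IsProbVec ω') (hd : 1 < d)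
    (hdil : ∀ t, 0 ≤ t → excess ω' t ≤ excess ω (d * t))
    (hδ : ∀ t, excess ω t ≤ excess ω' t + δ) :
    d - 1 ≤ δ * (1 + (d - 1) * Real.logb d (Fintype.card κ)) := by
  have hd_pos : 0 < d := by linarith
  have : Nonempty κ := by
    by_contra! _
    simpa using hω.2
  have one_le_card : (1 : ℝ) ≤ Fintype.card κ := by exact_mod_cast Fintype.card_pos
  obtain ⟨i, hi⟩ := Finite.exists_max ω
  have hωi : 0 ≤ ω i := hω.1 i
  have hdil_div (t : ℝ) (ht : 0 ≤ t) : excess ω' (t / d) ≤ excess ω t := by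
    simpa [mul_div_cancel₀ t hd_pos.ne'] using hdil (t / d) (by positivity)
  have excess_max_le := excess_div_pow_le hωi hd_pos.le hi fun t ht =>
    (hδ (t / d)).trans (add_le_add_left (hdil_div t ht) δ)
  have max_mul_le : (d - 1) * (ω i / d) ≤ δ :=
    calc (d - 1) * (ω i / d) = ω i - ω i / d ^ 1 := by field_simp
      _ ≤ excess ω (ω i / d ^ 1) := sub_le_excess ω _ i
      _ ≤ δ := by simpa using excess_max_le 1
  have hδ_nonneg : 0 ≤ δ := le_trans (mul_nonneg (by linarith) (by positivity)) max_mul_le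
  set L := Real.logb d (Fintype.card κ)
  set r := ⌊L⌋₊
  have one_le : 1 ≤ Fintype.card κ * (ω i / d ^ r / d) + r * δ := by
    linarith [hω'.one_sub_card_mul_le_excess (ω i / d ^ r / d),
      hdil_div (ω i / d ^ r) (by positivity), excess_max_le r]
  calc d - 1
    _ ≤ (d - 1) * (Fintype.card κ * (ω i / d ^ r / d) + r * δ) :=
        le_mul_of_one_le_right (by linarith) one_le
    _ = Fintype.card κ / d ^ r * ((d - 1) * (ω i / d)) + (d - 1) * r * δ := by ring
    _ ≤ Fintype.card κ / d ^ r * δ + (d - 1) * r * δ := by gcongr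
    _ ≤ (1 + (d - 1) * (L - r)) * δ + (d - 1) * r * δ := by
        gcongr
        exact div_pow_floor_logb_le hd one_le_card
    _ = δ * (1 + (d - 1) * L) := by ring

theorem embezzling_catalyst_change_bound_general {σ κ : Type*} [Fintype σ] [DecidableEq σ]
    [Nontrivial σ] [Fintype κ] [DecidableEq κ] {ω ω' : κ → ℝ} (hω : IsProbVec ω)
    (hω' : IsProbVec ω') (s : σ)
    (h : PMaj (pvTensor (Pi.single s 1) ω') (pvTensor (fun _ : σ => (Fintype.card σ : ℝ)⁻¹) ω)) :
    ((Fintype.card σ : ℝ) - 1) / (1 + ((Fintype.card σ : ℝ) - 1) *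
      Real.logb 2 (Fintype.card κ) / Real.logb 2 (Fintype.card σ)) ≤
      1 / 2 * ∑ i, |ω i - ω' i| := by
  have one_lt_card : (1 : ℝ) < Fintype.card σ := by exact_mod_cast Fintype.one_lt_card
  have excess_dilate (t : ℝ) (ht : 0 ≤ t) : excess ω' t ≤ excess ω (Fintype.card σ * t) := by
    simpa only [excess_pvTensor_single s ω' ht, excess_pvTensor_uniform] using h.excess_le ht
  have bound := sub_one_le_mul_of_excess_le hω hω' one_lt_card excess_dilate
    (excess_le_excess_add_half_sum_abs_sub (hω.2.trans hω'.2.symm))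
  have logb_nonneg : 0 ≤ Real.logb (Fintype.card σ) (Fintype.card κ) :=
    div_nonneg (Real.log_natCast_nonneg _) (Real.log_natCast_nonneg _)
  have logb_two_div : Real.logb 2 (Fintype.card κ) / Real.logb 2 (Fintype.card σ) =
      Real.logb (Fintype.card σ) (Fintype.card κ) :=
    div_div_div_cancel_right₀ (Real.log_pos one_lt_two).ne' _ _
  rw [mul_div_assoc, logb_two_div]
  exact div_le_of_le_mul₀ (by nlinarith) (by positivity) bound

/-- Ng–Mančinska–Cirstoiu–Eisert–Wehner lower bound on the minimal change of an
embezzling catalyst in the resource theory of purity: if the catalyst pair `(ω, ω')`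
enables every state transformation of a `d_S`-dimensional system via unital operations
(i.e. `q ⊗ ω' ≺ p ⊗ ω` for all probability vectors `p, q`), then the trace distance
between `ω` and `ω'` is bounded below. -/
theorem embezzling_catalyst_change_bound {dS dC : ℕ} (hS : 2 ≤ dS) (hC : 2 ≤ dC)
    (ω ω' : Fin dC → ℝ) (hω : IsProbVec ω) (hω' : IsProbVec ω')
    (h : ∀ p q : Fin dS → ℝ, IsProbVec p → IsProbVec q →
      PMaj (pvTensor q ω') (pvTensor p ω)) :
    ((dS : ℝ) - 1) / (1 + ((dS : ℝ) - 1) * Real.logb 2 dC / Real.logb 2 dS) ≤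
      (1 / 2) * ∑ i, |ω i - ω' i| := by
  have : NeZero dS := ⟨by omega⟩
  have : Nontrivial (Fin dS) := Fin.nontrivial_iff_two_le.2 hS
  simpa only [Fintype.card_fin] using embezzling_catalyst_change_bound_general hω hω' 0
    (h _ _ isProbVec_uniform (single_mem_stdSimplex ℝ 0))
end

section
/- For every integer d ≥ 2 and m = ⌈√d⌉, there exists a unitary matrix U of size dm×dm (acting on ℂ^d⊗ℂ^m, with indices (i,a), i ∈ {1..d}, a ∈ {1..m}) such that for every d×d complex density matrix ρ: Tr_A[U(ρ⊗(1/m)I_m)U†] = Δ(ρ) and Tr_S[U(ρ⊗(1/m)I_m)U†] = (1/m)I_m, where Δ(ρ) is the diagonal part of ρ in the standard basis (Δ(ρ)_{ij} = ρ_{ii}δ_{ij}), ρ⊗τ is the Kronecker product, and the partial traces of a matrix M indexed by pairs are defined entrywise by (Tr_A M)_{ij} = Σ_a M_{(i,a),(j,a)} and (Tr_S M)_{ab} = Σ_i M_{(i,a),(i,b)}. -/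
/-!
Let the system control a unitary `V i` on the ancilla. A state `ρ ⊗ τ` then has its `(i, j)` block
sent to `ρ i j • (V i * τ * (V j)ᴴ)`. For maximally mixed `τ` this block is proportional to
`V i * (V j)ᴴ`: its trace vanishes off the diagonal as soon as the `V i` are pairwise
trace-orthogonal, while the diagonal blocks average to `τ` by unitarity. An `m`-dimensional ancilla
carries `m ^ 2` such unitaries, the clock-and-shift matrices, so `d ≤ m ^ 2` suffices.
-/

open scoped ComplexOrder

/-- Partial trace over the ancilla `A` of a matrix on `ℂ^d ⊗ ℂ^m`:
`(Tr_A M)_{ij} = ∑ a, M_{(i,a),(j,a)}`. -/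
noncomputable def ptrA {d m : ℕ} (M : Matrix (Fin d × Fin m) (Fin d × Fin m) ℂ) :
    Matrix (Fin d) (Fin d) ℂ :=
  Matrix.of fun i j => ∑ a, M (i, a) (j, a)

/-- Partial trace over the system `S`: `(Tr_S M)_{ab} = ∑ i, M_{(i,a),(i,b)}`. -/
noncomputable def ptrS {d m : ℕ} (M : Matrix (Fin d × Fin m) (Fin d × Fin m) ℂ) :
    Matrix (Fin m) (Fin m) ℂ :=
  Matrix.of fun a b => ∑ i, M (i, a) (i, b)

open Matrix Kronecker

section OrthogonalUnitaries

variable {ι κ n p α : Type*} [Fintype n] [DecidableEq n] [Fintype p] [DecidableEq p]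
  [CommRing α] [StarRing α]

/-- A family of unitary matrices, pairwise orthogonal for the Hilbert–Schmidt inner product: a
unitary error basis, except that it need not span. -/
structure IsOrthogonalUnitaryFamily (V : ι → Matrix n n α) : Prop where
  mem_unitaryGroup (i : ι) : V i ∈ unitaryGroup n α
  trace_eq_zero {i j : ι} (hij : i ≠ j) : (V i * (V j)ᴴ).trace = 0

namespace IsOrthogonalUnitaryFamily

theorem trace_mul_conjTranspose [DecidableEq ι] {V : ι → Matrix n n α}
    (hV : IsOrthogonalUnitaryFamily V) (i j : ι) :
    (V i * (V j)ᴴ).trace = if i = j then (Fintype.card n : α) else 0 := by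
  split_ifs with hij
  · rw [hij, ← star_eq_conjTranspose, mem_unitaryGroup_iff.mp (hV.mem_unitaryGroup j), trace_one]
  · exact hV.trace_eq_zero hij

theorem comp_injective {V : ι → Matrix n n α} (hV : IsOrthogonalUnitaryFamily V) {f : κ → ι}
    (hf : Function.Injective f) : IsOrthogonalUnitaryFamily (V ∘ f) where
  mem_unitaryGroup i := hV.mem_unitaryGroup (f i)
  trace_eq_zero hij := hV.trace_eq_zero (hf.ne hij)

theorem submatrix_equiv {V : ι → Matrix n n α} (hV : IsOrthogonalUnitaryFamily V) (e : p ≃ n) :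
    IsOrthogonalUnitaryFamily fun i => (V i).submatrix e e where
  mem_unitaryGroup i := by
    rw [mem_unitaryGroup_iff, star_eq_conjTranspose, conjTranspose_submatrix, submatrix_mul_equiv,
      ← star_eq_conjTranspose, mem_unitaryGroup_iff.mp (hV.mem_unitaryGroup i),
      submatrix_one_equiv]
  trace_eq_zero {i j} hij := by
    rw [conjTranspose_submatrix, submatrix_mul_equiv, ← hV.trace_eq_zero hij]
    exact e.sum_comp fun x => (V i * (V j)ᴴ) x x

end IsOrthogonalUnitaryFamily

end OrthogonalUnitaries

section Weyl

variable {R 𝕜 : Type*} [CommRing R] [Fintype R] [DecidableEq R] [RCLike 𝕜]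

/-- The Weyl–Heisenberg matrix sending `|b⟩` to `ψ (b * p.2) |b + p.1⟩`. Over `ZMod N` this is
`X ^ p.1 * Z ^ p.2`, where `X` is the shift and `Z` the clock matrix. -/
def weylMatrix (ψ : AddChar R 𝕜) (p : R × R) : Matrix R R 𝕜 :=
  of fun a b => if b = a - p.1 then ψ (b * p.2) else 0

theorem weylMatrix_mul_conjTranspose_apply (ψ : AddChar R 𝕜) (p q : R × R) (a b : R) :
    (weylMatrix ψ p * (weylMatrix ψ q)ᴴ) a b =
      if a - p.1 = b - q.1 then ψ ((a - p.1) * (p.2 - q.2)) else 0 := by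
  simp only [mul_apply, weylMatrix, of_apply, conjTranspose_apply, ite_mul, zero_mul,
    Finset.sum_ite_eq', Finset.mem_univ, if_true]
  split_ifs
  · rw [mul_sub, sub_eq_add_neg (_ * _), AddChar.map_add_eq_mul, AddChar.map_neg_eq_conj]
    rfl
  · simp

theorem weylMatrix_mem_unitaryGroup (ψ : AddChar R 𝕜) (p : R × R) :
    weylMatrix ψ p ∈ unitaryGroup R 𝕜 := by
  rw [mem_unitaryGroup_iff, star_eq_conjTranspose]
  ext a b
  simp [weylMatrix_mul_conjTranspose_apply, one_apply]

theorem trace_weylMatrix_mul_conjTranspose_of_ne {ψ : AddChar R 𝕜} (hψ : ψ.IsPrimitive)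
    {p q : R × R} (hpq : p ≠ q) : (weylMatrix ψ p * (weylMatrix ψ q)ᴴ).trace = 0 := by
  simp only [trace, diag_apply, weylMatrix_mul_conjTranspose_apply, sub_right_inj]
  by_cases hshift : p.1 = q.1
  · have hclock : p.2 - q.2 ≠ 0 := sub_ne_zero.mpr fun h => hpq (Prod.ext hshift h)
    calc ∑ a, (if p.1 = q.1 then ψ ((a - p.1) * (p.2 - q.2)) else 0)
        = ∑ a, ψ ((a - p.1) * (p.2 - q.2)) := by simp only [hshift, if_true]
      _ = ∑ x, ψ (x * (p.2 - q.2)) :=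
          (Equiv.subRight p.1).sum_comp fun x => ψ (x * (p.2 - q.2))
      _ = 0 := by rw [AddChar.sum_mulShift _ hψ, if_neg hclock, Nat.cast_zero]
  · simp [hshift]

theorem isOrthogonalUnitaryFamily_weylMatrix {ψ : AddChar R 𝕜} (hψ : ψ.IsPrimitive) :
    IsOrthogonalUnitaryFamily (weylMatrix ψ) where
  mem_unitaryGroup := weylMatrix_mem_unitaryGroup ψ
  trace_eq_zero := trace_weylMatrix_mul_conjTranspose_of_ne hψ

theorem exists_isOrthogonalUnitaryFamily {ι n : Type*} [Fintype ι] [Fintype n] [DecidableEq n]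
    [Nonempty n] (h : Fintype.card ι ≤ Fintype.card n ^ 2) :
    ∃ V : ι → Matrix n n ℂ, IsOrthogonalUnitaryFamily V := by
  obtain ⟨f⟩ : Nonempty (ι ↪ ZMod (Fintype.card n) × ZMod (Fintype.card n)) :=
    Function.Embedding.nonempty_of_card_le (by simpa [ZMod.card, sq] using h)
  let e : n ≃ ZMod (Fintype.card n) := Fintype.equivOfCardEq (ZMod.card _).symm
  exact ⟨_, ((isOrthogonalUnitaryFamily_weylMatrix
    (ZMod.isPrimitive_stdAddChar _)).comp_injective f.injective).submatrix_equiv e⟩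

end Weyl

section Controlled

variable {ι n α : Type*} [DecidableEq ι]

/-- The controlled operation `∑ i, |i⟩⟨i| ⊗ V i`. The swap is there because `blockDiagonal` puts the
block index second, whereas here the control is the first tensor factor. -/
def controlledMatrix [Zero α] (V : ι → Matrix n n α) : Matrix (ι × n) (ι × n) α :=
  (blockDiagonal V).submatrix (Equiv.prodComm ι n) (Equiv.prodComm ι n)

variable [Fintype ι] [Fintype n] [CommRing α] [StarRing α]

theorem controlledMatrix_mem_unitaryGroup [DecidableEq n] {V : ι → Matrix n n α}
    (hV : ∀ i, V i ∈ unitaryGroup n α) : controlledMatrix V ∈ unitaryGroup (ι × n) α := by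
  have hVV (i : ι) : V i * (V i)ᴴ = 1 := mem_unitaryGroup_iff.mp (hV i)
  rw [mem_unitaryGroup_iff, star_eq_conjTranspose, controlledMatrix, conjTranspose_submatrix,
    submatrix_mul_equiv, blockDiagonal_conjTranspose, ← blockDiagonal_mul]
  simp only [hVV]
  rw [← Pi.one_def, blockDiagonal_one, submatrix_one_equiv]

theorem controlledMatrix_conj_kronecker_apply (V : ι → Matrix n n α) (ρ : Matrix ι ι α)
    (τ : Matrix n n α) (i j : ι) (a b : n) :
    (controlledMatrix V * (ρ ⊗ₖ τ) * (controlledMatrix V)ᴴ) (i, a) (j, b) =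
      ρ i j * (V i * τ * (V j)ᴴ) a b := by
  simp only [mul_apply, controlledMatrix, submatrix_apply, Equiv.prodComm_apply, Prod.swap_prod_mk,
    blockDiagonal_apply, conjTranspose_apply, Fintype.sum_prod_type, kroneckerMap_apply,
    mul_ite, ite_mul, zero_mul, mul_zero, apply_ite star, star_zero, Finset.sum_ite_eq,
    Finset.sum_ite_irrel, Finset.sum_const_zero, Finset.mem_univ, if_true,
    Finset.mul_sum, Finset.sum_mul]
  exact Finset.sum_congr rfl fun _ _ => Finset.sum_congr rfl fun _ _ => by ring

end Controlled

section PartialTrace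

variable {d m : ℕ}

theorem ptrA_controlledMatrix_conj_kronecker (V : Fin d → Matrix (Fin m) (Fin m) ℂ)
    (ρ : Matrix (Fin d) (Fin d) ℂ) (τ : Matrix (Fin m) (Fin m) ℂ) :
    ptrA (controlledMatrix V * (ρ ⊗ₖ τ) * (controlledMatrix V)ᴴ) =
      of fun i j => ρ i j * (V i * τ * (V j)ᴴ).trace := by
  ext i j
  simp only [ptrA, of_apply, controlledMatrix_conj_kronecker_apply, trace, diag_apply,
    Finset.mul_sum]

theorem ptrS_controlledMatrix_conj_kronecker (V : Fin d → Matrix (Fin m) (Fin m) ℂ)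
    (ρ : Matrix (Fin d) (Fin d) ℂ) (τ : Matrix (Fin m) (Fin m) ℂ) :
    ptrS (controlledMatrix V * (ρ ⊗ₖ τ) * (controlledMatrix V)ᴴ) =
      ∑ i, ρ i i • (V i * τ * (V i)ᴴ) := by
  ext a b
  simp only [ptrS, of_apply, controlledMatrix_conj_kronecker_apply, Matrix.sum_apply,
    Matrix.smul_apply, smul_eq_mul]

theorem ptrA_controlledMatrix_conj_kronecker_inv_smul_one [NeZero m]
    {V : Fin d → Matrix (Fin m) (Fin m) ℂ} (hV : IsOrthogonalUnitaryFamily V)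
    (ρ : Matrix (Fin d) (Fin d) ℂ) :
    ptrA (controlledMatrix V * (ρ ⊗ₖ ((m : ℂ)⁻¹ • 1)) * (controlledMatrix V)ᴴ) =
      diagonal fun i => ρ i i := by
  have hm : (m : ℂ) ≠ 0 := NeZero.ne _
  rw [ptrA_controlledMatrix_conj_kronecker]
  ext i j
  rw [of_apply, mul_smul_comm, mul_one, smul_mul_assoc, trace_smul, hV.trace_mul_conjTranspose,
    Fintype.card_fin, diagonal_apply]
  split_ifs with hij
  · rw [hij, smul_eq_mul, inv_mul_cancel₀ hm, mul_one]
  · rw [smul_zero, mul_zero]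

theorem ptrS_controlledMatrix_conj_kronecker_smul_one {V : Fin d → Matrix (Fin m) (Fin m) ℂ}
    (hV : ∀ i, V i ∈ unitaryGroup (Fin m) ℂ) (ρ : Matrix (Fin d) (Fin d) ℂ) (c : ℂ) :
    ptrS (controlledMatrix V * (ρ ⊗ₖ (c • 1)) * (controlledMatrix V)ᴴ) =
      ρ.trace • c • (1 : Matrix (Fin m) (Fin m) ℂ) := by
  have hconj (i : Fin d) : V i * (c • 1) * (V i)ᴴ = c • 1 := by
    rw [mul_smul_comm, mul_one, smul_mul_assoc, ← star_eq_conjTranspose,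
      mem_unitaryGroup_iff.mp (hV i)]
  simp only [ptrS_controlledMatrix_conj_kronecker, hconj, trace, diag_apply, Finset.sum_smul]

end PartialTrace

theorem le_natCeil_sqrt_sq (d : ℕ) : d ≤ ⌈Real.sqrt d⌉₊ ^ 2 := by
  exact_mod_cast (Real.sqrt_le_left (Nat.cast_nonneg _)).mp (Nat.le_ceil (Real.sqrt d))

theorem catalytic_dephasing_general {d m : ℕ} [NeZero m] (hdm : d ≤ m ^ 2) :
    ∃ U ∈ unitaryGroup (Fin d × Fin m) ℂ, ∀ ρ : Matrix (Fin d) (Fin d) ℂ,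
      ptrA (U * (ρ ⊗ₖ ((m : ℂ)⁻¹ • 1)) * Uᴴ) = diagonal (fun i => ρ i i) ∧
      ptrS (U * (ρ ⊗ₖ ((m : ℂ)⁻¹ • 1)) * Uᴴ) = ρ.trace • (m : ℂ)⁻¹ • 1 := by
  obtain ⟨V, hV⟩ : ∃ V : Fin d → Matrix (Fin m) (Fin m) ℂ, IsOrthogonalUnitaryFamily V :=
    exists_isOrthogonalUnitaryFamily (by simpa using hdm)
  exact ⟨controlledMatrix V, controlledMatrix_mem_unitaryGroup hV.mem_unitaryGroup, fun ρ =>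
    ⟨ptrA_controlledMatrix_conj_kronecker_inv_smul_one hV ρ,
      ptrS_controlledMatrix_conj_kronecker_smul_one hV.mem_unitaryGroup ρ _⟩⟩

/-- Boes–Eisert–Gallego–Müller–Wilming catalytic dephasing: for `m = ⌈√d⌉` there is a
unitary on `ℂ^d ⊗ ℂ^m` that, together with a maximally mixed ancilla of dimension `m`,
implements the completely dephasing map on every `d`-dimensional state while returning
the ancilla exactly in its initial maximally mixed state. -/
theorem catalytic_dephasing (d : ℕ) (hd : 2 ≤ d) (m : ℕ) (hm : m = ⌈Real.sqrt d⌉₊) :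
    ∃ U ∈ Matrix.unitaryGroup (Fin d × Fin m) ℂ,
      ∀ ρ : Matrix (Fin d) (Fin d) ℂ, ρ.PosSemidef → ρ.trace = 1 →
        ptrA (U * Matrix.kroneckerMap (· * ·) ρ
              (((m : ℂ))⁻¹ • (1 : Matrix (Fin m) (Fin m) ℂ)) * U.conjTranspose) =
            Matrix.diagonal (fun i => ρ i i) ∧
        ptrS (U * Matrix.kroneckerMap (· * ·) ρ
              (((m : ℂ))⁻¹ • (1 : Matrix (Fin m) (Fin m) ℂ)) * U.conjTranspose) =
            ((m : ℂ))⁻¹ • (1 : Matrix (Fin m) (Fin m) ℂ) := by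
  subst hm
  have : NeZero ⌈Real.sqrt d⌉₊ := ⟨(Nat.ceil_pos.mpr (by positivity)).ne'⟩
  obtain ⟨U, hU, hdephase⟩ := catalytic_dephasing_general (le_natCeil_sqrt_sq d)
  exact ⟨U, hU, fun ρ _ hρ => by simpa only [hρ, one_smul] using hdephase ρ⟩
end
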